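/- Let k and s be natural numbers with k ≥ 4 and 1 ≤ s ≤ (k+1)²/4. Then for each ε > 0 there exists a constant C = C(s,k,ε) > 0 such that for all real X ≥ 1 one has J_{s,k}(X) ≤ C·X^{s+ε}. -/

import Mathlib

/-- Number of integral solutions of the Vinogradov system
of degree k in 2s variables, all lying in [1, X]. -/
noncomputable def Jcount (s k : ℕ) (X : ℝ) : ℕ :=
  Set.ncard {xy : (Fin s → ℤ) × (Fin s → ℤ) |
    (∀ i, 1 ≤ xy.1 i ∧ (xy.1 i : ℝ) ≤ X) ∧
    (∀ i, 1 ≤ xy.2 i ∧ (xy.2 i : ℝ) ≤ X) ∧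
    ∀ j ∈ Finset.Icc 1 k, ∑ i, ((xy.1 i) ^ j - (xy.2 i) ^ j) = 0}

/-!
This is Wooley's nested efficient congruencing with a fixed prime `p` and the variables in
`[0, p ^ M)`. Write `k = R + q` with `q ≤ R ≤ q + 1` and `s ≤ R * (q + 1)`; filling up with diagonal
solutions, one may assume that `s = R * (q + 1)`. Suppose that the count is
`≪ X ^ (s + (q + 1) * Λ)`, and consider solutions in which `2 * q * R` variables are congruent to
`η` modulo `p ^ b`, while the remaining `2 * R` form a transversal tuple, congruent modulo `p ^ a`
only, with `q * a ≤ b`.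
A polynomial of degree at most `k` divisible by `(z - η) ^ (q + 1)` then has equal sums modulo
`p ^ ((q + 1) * b)` over the transversal variables `x i` and `y i` of the two sides. Choosing one
with derivative proportional to `(z - η) ^ q * ∏ l ≠ i, (z - y l)` isolates the `i`-th variable and
yields `x i ≡ y i` modulo `p ^ (q * b)`. Hölder's inequality now exchanges the roles of the two
blocks and replaces `(a, b)` by `(b, q * b)`, and each such step saves a further factor
`p ^ (Λ * b)` over the trivial bound. As long as `Λ ≥ δ > 0`, boundedly many steps save enough to
lower `Λ` by an amount depending only on `δ`, so every `Λ > 0` is admissible.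
-/

open Finset Polynomial
open scoped BigOperators

lemma exists_derivative_eq_factorial_mul {A : Type*} [CommSemiring A] {n m : ℕ} {Q : A[X]}
    (hQ : Q.natDegree < n) (hX : X ^ m ∣ Q) :
    ∃ P : A[X], derivative P = (n.factorial : A[X]) * Q ∧ P.natDegree ≤ n ∧ X ^ (m + 1) ∣ P := by
  let P : A[X] := ∑ j ∈ range n, C ((n.factorial / (j + 1) : ℕ) * Q.coeff j) * X ^ (j + 1)
  have coeff_succ (d : ℕ) :
      P.coeff (d + 1) = if d < n then (n.factorial / (d + 1) : ℕ) * Q.coeff d else 0 := by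
    simp only [P, finsetSum_coeff, coeff_C_mul_X_pow, add_left_inj, sum_ite_eq, mem_range]
  refine ⟨P, ?_, ?_, X_pow_dvd_iff.2 ?_⟩
  · ext d
    rw [coeff_derivative, coeff_succ, ← C_eq_natCast, coeff_C_mul]
    split_ifs with hd
    · have h : ((n.factorial / (d + 1) : ℕ) : A) * (d + 1) = n.factorial :=
        mod_cast congrArg Nat.cast (Nat.div_mul_cancel (Nat.dvd_factorial d.succ_pos hd))
      rw [← h]
      ring
    · rw [coeff_eq_zero_of_natDegree_lt (by omega)]
      simp
  · refine natDegree_sum_le_of_forall_le _ _ fun j hj => ?_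
    exact (natDegree_C_mul_X_pow_le _ _).trans (mem_range.1 hj)
  · rintro (_ | d) hd
    · simp [P]
    · rw [coeff_succ, X_pow_dvd_iff.1 hX d (by omega), mul_zero, ite_self]

section Congruences

variable {A ι : Type*} [CommRing A]

lemma natDegree_linear_pow_mul_prod_lt {ℓ : A[X]} (hℓ : ℓ.natDegree ≤ 1) (q : ℕ) (s : Finset ι)
    (w : ι → A) : (ℓ ^ q * ∏ l ∈ s, (X - C (w l))).natDegree < q + #s + 1 := by
  have hpow : (ℓ ^ q).natDegree ≤ q := by simpa using natDegree_pow_le_of_le q hℓ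
  have hprod : (∏ l ∈ s, (X - C (w l))).natDegree ≤ #s := by
    refine (natDegree_prod_le _ _).trans ?_
    simpa using sum_le_card_nsmul s _ 1 fun l _ => natDegree_X_sub_C_le (w l)
  exact Nat.lt_succ_of_le (natDegree_mul_le_of_le hpow hprod)

-- Along `z ↦ t + d * z` the derivative of `P` acquires the factor `d ^ #s` from the zeros
-- `t + d * v l`, so that, up to a constant, `P` is `d ^ (#s + 1)` times a polynomial in `z`.
lemma exists_eval_add_mul_eq [IsDomain A] [CharZero A] (q : ℕ) (s : Finset ι) (t d : A)
    (v : ι → A) :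
    ∃ (P S : A[X]) (c : A), P.natDegree ≤ q + #s + 1 ∧ X ^ (q + 1) ∣ P ∧
      (∀ z, P.eval (t + d * z) = d ^ (#s + 1) * S.eval z + c) ∧
      ∀ z, (derivative S).eval z =
        (q + #s + 1).factorial * ((t + d * z) ^ q * ∏ l ∈ s, (z - v l)) := by
  let ℓ : A[X] := C d * X + C t
  obtain ⟨P, hP', hPdeg, hPX⟩ := exists_derivative_eq_factorial_mul
    (natDegree_linear_pow_mul_prod_lt natDegree_X_le q s fun l => t + d * v l)
    (dvd_mul_right (X ^ q) _)
  obtain ⟨S, hS', -, -⟩ := exists_derivative_eq_factorial_mul (m := 0)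
    (natDegree_linear_pow_mul_prod_lt (ℓ := ℓ) natDegree_linear_le q s v)
    (by rw [pow_zero]; exact one_dvd _)
  have hprod : (∏ l ∈ s, (X - C (t + d * v l))).comp ℓ = C d ^ #s * ∏ l ∈ s, (X - C (v l)) := by
    rw [Polynomial.prod_comp, ← prod_const, ← prod_mul_distrib]
    refine prod_congr rfl fun l _ => ?_
    simp only [ℓ, sub_comp, X_comp, add_comp, mul_comp, C_comp, C_add, C_mul]
    ring
  have hderiv : derivative (P.comp ℓ - C d ^ (#s + 1) * S) = 0 := by
    have hℓ' : derivative ℓ = C d := by simp [ℓ]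
    rw [derivative_sub, derivative_comp, ← C_pow, derivative_C_mul, hP', hS', hℓ', mul_comp,
      mul_comp, hprod, natCast_comp, pow_comp, X_comp, C_pow]
    ring
  obtain ⟨c, hc⟩ : ∃ c, P.comp ℓ - C d ^ (#s + 1) * S = C c :=
    ⟨_, eq_C_of_natDegree_eq_zero (derivative_eq_zero.1 hderiv)⟩
  refine ⟨P, S, c, hPdeg, hPX, fun z => ?_, fun z => ?_⟩
  · have h := congrArg (eval z) (sub_eq_iff_eq_add'.1 hc)
    simpa [ℓ, add_comm t] using h
  · simp [hS', ℓ, eval_prod, add_comm t]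

lemma pow_succ_dvd_eval_sub_eval_sub (S : A[X]) {π x y : A} {e : ℕ} (he : 1 ≤ e)
    (h : π ^ e ∣ x - y) :
    π ^ (e + 1) ∣ S.eval x - S.eval y - (derivative S).eval y * (x - y) := by
  obtain ⟨m, hm⟩ := S.binomExpansion y (x - y)
  rw [add_sub_cancel] at hm
  rw [hm, add_assoc, add_sub_cancel_left, add_sub_cancel_left]
  refine ((pow_dvd_pow π (by omega : e + 1 ≤ e * 2)).trans ?_).mul_left m
  rw [pow_mul]
  exact pow_dvd_pow_of_dvd h 2

variable [Fintype ι]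

lemma pow_succ_dvd_sub_of_dvd_sum {S : ℤ[X]} {p : ℤ} (hp : Prime p) {u v : ι → ℤ} {e : ℕ}
    (he : 1 ≤ e) (huv : ∀ l, p ^ e ∣ u l - v l)
    (hsum : p ^ (e + 1) ∣ ∑ l, (S.eval (u l) - S.eval (v l))) {i : ι}
    (hne : ∀ l ≠ i, (derivative S).eval (v l) = 0) (hi : ¬ p ∣ (derivative S).eval (v i)) :
    p ^ (e + 1) ∣ u i - v i := by
  have hlin : p ^ (e + 1) ∣ ∑ l, (derivative S).eval (v l) * (u l - v l) := by
    have h := dvd_sub hsum (dvd_sum fun l (_ : l ∈ univ) =>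
      pow_succ_dvd_eval_sub_eval_sub S he (huv l))
    rw [← sum_sub_distrib] at h
    simpa only [sub_sub_cancel] using h
  rw [Fintype.sum_eq_single i fun l hl => by rw [hne l hl, zero_mul]] at hlin
  exact ((Prime.coprime_iff_not_dvd hp).2 hi).pow_left.dvd_of_dvd_mul_left hlin

lemma pow_dvd_sub_of_forall_dvd_sum {p q a E : ℕ} (hp : p.Prime) (hpq : Fintype.card ι + q < p)
    {t : ℤ} {u v : ι → ℤ} (ht : ∀ i, ¬ (p : ℤ) ∣ t + p ^ a * v i)
    (hv : Pairwise fun i j => ¬ (p : ℤ) ∣ v i - v j) (huv : ∀ i, (p : ℤ) ∣ u i - v i)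
    (hP : ∀ P : ℤ[X], P.natDegree ≤ Fintype.card ι + q → X ^ (q + 1) ∣ P →
      (p : ℤ) ^ E ∣ ∑ i, (P.eval (t + p ^ a * u i) - P.eval (t + p ^ a * v i)))
    {e : ℕ} (he : 1 ≤ e) (heE : e + a * Fintype.card ι ≤ E) (i : ι) :
    (p : ℤ) ^ e ∣ u i - v i := by
  classical
  have hprime : Prime (p : ℤ) := Nat.prime_iff_prime_int.1 hp
  induction e, he using Nat.le_induction generalizing i with
  | base => simpa using huv i
  | succ e he ih =>
    have hcard : #(univ.erase i) + 1 = Fintype.card ι := by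
      rw [card_erase_add_one (mem_univ i), card_univ]
    obtain ⟨P, S, c, hdeg, hX, hval, hder⟩ :=
      exists_eval_add_mul_eq q (univ.erase i) t ((p : ℤ) ^ a) v
    rw [add_assoc, hcard, add_comm] at hdeg hder
    rw [hcard] at hval
    refine pow_succ_dvd_sub_of_dvd_sum (S := S) hprime he (fun l => ih (by omega) l) ?_
      (fun l hl => ?_) ?_
    · have h := (pow_dvd_pow (p : ℤ) heE).trans (hP P hdeg hX)
      simp only [hval, add_sub_add_right_eq_sub, ← mul_sub, ← mul_sum] at h
      rw [add_comm (e + 1), pow_add, pow_mul] at h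
      exact (mul_dvd_mul_iff_left (pow_ne_zero _ (pow_ne_zero _ hprime.ne_zero))).1 h
    · rw [hder, prod_eq_zero (mem_erase.2 ⟨hl, mem_univ l⟩) (sub_self _), mul_zero, mul_zero]
    · rw [hder, hprime.dvd_mul, hprime.dvd_mul, hprime.dvd_finsetProd_iff]
      rintro (hfac | hpow | ⟨l, hl, hdiff⟩)
      · exact hpq.not_ge (hp.dvd_factorial.1 (Int.natCast_dvd_natCast.1 hfac))
      · exact ht i (hprime.dvd_of_dvd_pow hpow)
      · exact hv (ne_of_mem_erase hl).symm hdiff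

end Congruences

/-- The Vinogradov system of degree `k`: the power sums of `x` and `y` of degrees `1, …, k`
agree. -/
def IsVinogradovSolution {A ι : Type*} [Semiring A] [Fintype ι] (k : ℕ) (x y : ι → A) : Prop :=
  ∀ j ∈ Icc 1 k, ∑ i, x i ^ j = ∑ i, y i ^ j

section VinogradovSystem

variable {A ι κ : Type*} [Fintype ι] [Fintype κ] {k : ℕ}

lemma isVinogradovSolution_natCast_iff [Semiring A] [CharZero A] {x y : ι → ℕ} :
    IsVinogradovSolution k (fun i => (x i : A)) (fun i => (y i : A)) ↔
      IsVinogradovSolution k x y :=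
  forall₂_congr fun _ _ => by beta_reduce; norm_cast

lemma IsVinogradovSolution.sum_eval_eq [Semiring A] {x y : ι → A}
    (h : IsVinogradovSolution k x y) {P : A[X]} (hP : P.natDegree ≤ k) :
    ∑ i, P.eval (x i) = ∑ i, P.eval (y i) := by
  simp only [eval_eq_sum_range' (Nat.lt_succ_of_le hP)]
  rw [sum_comm, sum_comm (s := univ)]
  refine sum_congr rfl fun j hj => ?_
  rw [← mul_sum, ← mul_sum]
  rcases Nat.eq_zero_or_pos j with rfl | hj0
  · simp only [pow_zero]
  · rw [h j (mem_Icc.2 ⟨hj0, Nat.lt_succ_iff.1 (mem_range.1 hj)⟩)]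

lemma IsVinogradovSolution.of_add_mul [CommRing A] [IsDomain A] {c d : A} (hd : d ≠ 0)
    {x y : ι → A}
    (h : IsVinogradovSolution k (fun i => c + d * x i) (fun i => c + d * y i)) :
    IsVinogradovSolution k x y := by
  intro j hj
  have hsum := h.sum_eval_eq (P := (X - C c) ^ j) (by
    simpa only [natDegree_pow, natDegree_X_sub_C, mul_one] using (mem_Icc.1 hj).2)
  simp only [eval_pow, eval_sub, eval_X, eval_C, add_sub_cancel_left, mul_pow, ← mul_sum] at hsum
  exact mul_left_cancel₀ (pow_ne_zero j hd) hsum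

lemma IsVinogradovSolution.pow_dvd_sum_eval_sub [CommRing A] {x y : ι ⊕ κ → A}
    (h : IsVinogradovSolution k x y) {c d : A} (hx : ∀ l, d ∣ x (Sum.inr l) - c)
    (hy : ∀ l, d ∣ y (Sum.inr l) - c) {P : A[X]} (hP : P.natDegree ≤ k) {m : ℕ} (hX : X ^ m ∣ P) :
    d ^ m ∣ ∑ i, (P.eval (x (Sum.inl i) - c) - P.eval (y (Sum.inl i) - c)) := by
  have hdvd {z : A} (hz : d ∣ z - c) : d ^ m ∣ P.eval (z - c) := by
    obtain ⟨Q, rfl⟩ := hX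
    rw [eval_mul, eval_pow, eval_X]
    exact (pow_dvd_pow_of_dvd hz m).mul_right _
  have hsum := h.sum_eval_eq (P := P.comp (X - C c)) (by
    refine natDegree_comp_le.trans ((Nat.mul_le_mul_left _ (natDegree_X_sub_C_le c)).trans ?_)
    rwa [mul_one])
  simp only [Fintype.sum_sum_type, eval_comp, eval_sub, eval_X, eval_C] at hsum
  rw [sum_sub_distrib, sub_eq_sub_iff_add_eq_add.2 (hsum.trans (add_comm _ _))]
  exact dvd_sub (dvd_sum fun l _ => hdvd (hy l)) (dvd_sum fun l _ => hdvd (hx l))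

end VinogradovSystem

section Transversal

variable {ι κ : Type*}

/-- The residues `ξ i` agree modulo `p ^ a` but are pairwise distinct modulo `p ^ (a + 1)`. These
are the tuples over which the congruencing step gains information. -/
def IsTransversal (p a : ℕ) (ξ : ι → ℕ) : Prop :=
  (∀ i j, ξ i ≡ ξ j [MOD p ^ a]) ∧ Pairwise fun i j => ¬ ξ i ≡ ξ j [MOD p ^ (a + 1)]

lemma IsTransversal.congr {p a : ℕ} {ξ ζ : ι → ℕ} (hξ : IsTransversal p a ξ)
    (h : ∀ i, ζ i ≡ ξ i [MOD p ^ (a + 1)]) : IsTransversal p a ζ := by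
  have h' i : ζ i ≡ ξ i [MOD p ^ a] := (h i).of_dvd (pow_dvd_pow p a.le_succ)
  exact ⟨fun i j => ((h' i).trans (hξ.1 i j)).trans (h' j).symm,
    fun i j hij hζ => hξ.2 hij (((h i).symm.trans hζ).trans (h j))⟩

lemma exists_eq_add_mul_of_modEq {c d : ℕ} {z : ι → ℕ} (h : ∀ i, z i ≡ c [MOD d]) :
    ∃ w : ι → ℤ, ∀ i, (z i : ℤ) = c + d * w i := by
  choose w hw using fun i => Nat.modEq_iff_dvd.1 (h i).symm
  exact ⟨w, fun i => by rw [← hw, add_sub_cancel]⟩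

lemma modEq_mul_iff_dvd_sub {c d m x y : ℕ} (hd : d ≠ 0) {u v : ℤ} (hx : (x : ℤ) = c + d * u)
    (hy : (y : ℤ) = c + d * v) : x ≡ y [MOD d * m] ↔ (m : ℤ) ∣ u - v := by
  have hd' : (d : ℤ) ≠ 0 := mod_cast hd
  rw [Nat.ModEq.comm, Nat.modEq_iff_dvd, hx, hy, add_sub_add_left_eq_sub, ← mul_sub, Nat.cast_mul,
    mul_dvd_mul_iff_left hd']

variable [Fintype ι] [Fintype κ]

lemma IsTransversal.modEq_of_isVinogradovSolution {p q a b e η : ℕ} (hp : p.Prime)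
    (hpq : Fintype.card ι + q < p) {x y : ι ⊕ κ → ℕ}
    (h : IsVinogradovSolution (Fintype.card ι + q) x y)
    (hy : IsTransversal p a (y ∘ Sum.inl)) (hη : ∀ i, ¬ y (Sum.inl i) ≡ η [MOD p])
    (hxy : ∀ i, x (Sum.inl i) ≡ y (Sum.inl i) [MOD p ^ (a + 1)])
    (hxr : ∀ l, x (Sum.inr l) ≡ η [MOD p ^ b]) (hyr : ∀ l, y (Sum.inr l) ≡ η [MOD p ^ b])
    (he : 1 ≤ e) (heb : e + a * Fintype.card ι ≤ b * (q + 1)) (i : ι) :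
    x (Sum.inl i) ≡ y (Sum.inl i) [MOD p ^ (a + e)] := by
  have hpa : p ^ a ≠ 0 := pow_ne_zero a hp.ne_zero
  obtain ⟨v, hv⟩ := exists_eq_add_mul_of_modEq fun l => hy.1 l i
  obtain ⟨u, hu⟩ := exists_eq_add_mul_of_modEq fun l =>
    ((hxy l).of_dvd (pow_dvd_pow p a.le_succ)).trans (hy.1 l i)
  simp only [Function.comp_apply] at hu hv
  rw [pow_add, modEq_mul_iff_dvd_sub hpa (hu i) (hv i)]
  rw [Nat.cast_pow] at hu hv ⊢
  refine pow_dvd_sub_of_forall_dvd_sum hp hpq (E := b * (q + 1)) (t := y (Sum.inl i) - η)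
    (fun l hl => hη l ?_) (fun l m hlm hl => hy.2 hlm ?_) (fun l => ?_) (fun P hP hX => ?_)
    he heb i
  · rw [sub_add_eq_add_sub, ← hv] at hl
    exact (Nat.modEq_iff_dvd.2 hl).symm
  · rw [pow_succ]
    exact (modEq_mul_iff_dvd_sub hpa (mod_cast hv l) (mod_cast hv m)).2 hl
  · refine (modEq_mul_iff_dvd_sub hpa (mod_cast hu l) (mod_cast hv l)).1 ?_
    rw [← pow_succ]
    exact hxy l
  · have hdvd {z : ℕ} (hz : z ≡ η [MOD p ^ b]) : (p : ℤ) ^ b ∣ z - η :=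
      mod_cast Nat.modEq_iff_dvd.1 hz.symm
    have hsum := (isVinogradovSolution_natCast_iff (A := ℤ)).2 h |>.pow_dvd_sum_eval_sub
      (fun l => hdvd (hxr l)) (fun l => hdvd (hyr l)) hP hX
    simpa only [sub_add_eq_add_sub, ← hu, ← hv, pow_mul] using hsum

end Transversal

/-- The elements of `[0, n)` congruent to `ξ` modulo `d`. For `d ∣ n` these represent the residues
modulo `n` that refine the residue `ξ` modulo `d`. -/
def residueClass (d n ξ : ℕ) : Finset ℕ := (range n).filter fun x => x ≡ ξ [MOD d]

section ResidueClass

variable {d d' n ξ : ℕ}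

lemma mem_residueClass {x : ℕ} : x ∈ residueClass d n ξ ↔ x < n ∧ x ≡ ξ [MOD d] := by
  simp only [residueClass, mem_filter, mem_range]

lemma card_residueClass (hd : 0 < d) (hn : d ∣ n) : #(residueClass d n ξ) = n / d := by
  rw [residueClass, ← Nat.count_eq_card_filter_range, Nat.count_modEq_card _ hd,
    Nat.mod_eq_zero_of_dvd hn, if_neg (Nat.not_lt_zero _), add_zero]

lemma sum_residueClass {E : Type*} [AddCommMonoid E] (hd : d ∣ d') (hd' : 0 < d') (g : ℕ → E) :
    ∑ x ∈ residueClass d n ξ, g x =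
      ∑ ζ ∈ residueClass d d' ξ, ∑ x ∈ residueClass d' n ζ, g x := by
  have hmaps : ∀ x ∈ residueClass d n ξ, x % d' ∈ residueClass d d' ξ := fun x hx =>
    mem_residueClass.2 ⟨Nat.mod_lt x hd',
      ((Nat.mod_modEq x d').of_dvd hd).trans (mem_residueClass.1 hx).2⟩
  rw [← sum_fiberwise_of_maps_to hmaps]
  refine sum_congr rfl fun ζ hζ => sum_congr ?_ fun _ _ => rfl
  ext x
  obtain ⟨hζlt, hζξ⟩ := mem_residueClass.1 hζ
  have hmod : x % d' = ζ ↔ x ≡ ζ [MOD d'] := by rw [Nat.ModEq, Nat.mod_eq_of_lt hζlt]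
  rw [mem_filter, mem_residueClass, mem_residueClass, hmod, and_assoc]
  exact and_congr_right' (and_iff_right_of_imp fun h => (h.of_dvd hd).trans hζξ)

end ResidueClass

section VinogradovSolutions

variable {ι : Type*} [Fintype ι] {k s : ℕ}

open Classical in
/-- The solutions of the Vinogradov system of degree `k` in which the `i`-th variables on both
sides are restricted to `A i`. -/
noncomputable def vinogradovSolutions (k : ℕ) (A : ι → Finset ℕ) : Finset ((ι → ℕ) × (ι → ℕ)) :=
  (Fintype.piFinset A ×ˢ Fintype.piFinset A).filter fun z => IsVinogradovSolution k z.1 z.2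

/-- The number of solutions of the Vinogradov system of degree `k` in `2 * s` variables from
`[0, n)`. By translation invariance this is `J_{s,k}(n)`. -/
noncomputable def vinogradovCount (s k n : ℕ) : ℕ :=
  #(vinogradovSolutions k fun _ : Fin s => range n)

lemma mem_vinogradovSolutions {A : ι → Finset ℕ} {z : (ι → ℕ) × (ι → ℕ)} :
    z ∈ vinogradovSolutions k A ↔
      (∀ i, z.1 i ∈ A i) ∧ (∀ i, z.2 i ∈ A i) ∧ IsVinogradovSolution k z.1 z.2 := by
  simp only [vinogradovSolutions, mem_filter, mem_product, Fintype.mem_piFinset, and_assoc]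

lemma card_vinogradovSolutions_residueClass_le {d n : ℕ} (hd : 0 < d) (hn : d ∣ n) (ξ : ℕ) :
    #(vinogradovSolutions k fun _ : Fin s => residueClass d n ξ) ≤ vinogradovCount s k (n / d) := by
  have eq_add_mul {x : ℕ} (hx : x ∈ residueClass d n ξ) : x = ξ % d + d * (x / d) := by
    rw [← (mem_residueClass.1 hx).2, Nat.mod_add_div]
  refine card_le_card_of_injOn (fun z => (fun i => z.1 i / d, fun i => z.2 i / d)) ?_ ?_
  · intro z hz
    rw [mem_coe, mem_vinogradovSolutions] at hz ⊢
    obtain ⟨hz₁, hz₂, hz⟩ := hz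
    have div_mem {x : ℕ} (hx : x ∈ residueClass d n ξ) : x / d ∈ range (n / d) :=
      mem_range.2 (Nat.div_lt_div_of_lt_of_dvd hn (mem_residueClass.1 hx).1)
    refine ⟨fun i => div_mem (hz₁ i), fun i => div_mem (hz₂ i), ?_⟩
    rw [funext fun i => eq_add_mul (hz₁ i), funext fun i => eq_add_mul (hz₂ i)] at hz
    rw [← isVinogradovSolution_natCast_iff (A := ℤ)] at hz ⊢
    push_cast at hz ⊢
    exact hz.of_add_mul (mod_cast hd.ne')
  · intro z hz w hw hzw
    rw [mem_coe, mem_vinogradovSolutions] at hz hw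
    have div_inj {x y : ℕ} (hx : x ∈ residueClass d n ξ) (hy : y ∈ residueClass d n ξ)
        (hxy : x / d = y / d) : x = y := by
      rw [eq_add_mul hx, eq_add_mul hy, hxy]
    rw [Prod.mk.injEq] at hzw
    exact Prod.ext (funext fun i => div_inj (hz.1 i) (hw.1 i) (congrFun hzw.1 i))
      (funext fun i => div_inj (hz.2.1 i) (hw.2.1 i) (congrFun hzw.2 i))

end VinogradovSolutions

lemma addChar_sum_eq_prod {A M ι : Type*} [AddCommMonoid A] [CommMonoid M] (χ : AddChar A M)
    (t : Finset ι) (g : ι → A) : χ (∑ i ∈ t, g i) = ∏ i ∈ t, χ (g i) :=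
  map_prod χ.toMonoidHom (fun i => Multiplicative.ofAdd (g i)) t

lemma expect_stdAddChar_dotProduct {N : ℕ} [NeZero N] {κ : Type*} [Fintype κ] [DecidableEq κ]
    (w : κ → ZMod N) :
    𝔼 α : κ → ZMod N, (ZMod.stdAddChar (α ⬝ᵥ w) : ℂ) = if w = 0 then 1 else 0 := by
  let L : (κ → ZMod N) →+ ZMod N :=
    { toFun := fun α => α ⬝ᵥ w
      map_zero' := zero_dotProduct w
      map_add' := fun α β => add_dotProduct α β w }
  have hL : (ZMod.stdAddChar (N := N)).compAddMonoidHom L = 0 ↔ w = 0 := by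
    refine ⟨fun h => funext fun j => ?_, fun h => ?_⟩
    · have hj : (ZMod.stdAddChar (w j) : ℂ) = ZMod.stdAddChar (0 : ZMod N) := by
        simpa [L] using DFunLike.congr_fun h (Pi.single j 1)
      exact ZMod.injective_stdAddChar hj
    · ext α
      simp [L, h]
  exact (AddChar.expect_eq_ite (ZMod.stdAddChar.compAddMonoidHom L)).trans (if_congr hL rfl rfl)

/-- The group of frequencies of the Vinogradov exponential sums of degree `k` over subsets of
`[0, n)`. The modulus exceeds every sum of `s` powers `x ^ j` with `x < n` and `j ≤ k`, so that
congruences between two such sums are equalities. -/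
abbrev Frequency (s k n : ℕ) : Type := Fin k → ZMod (s * n ^ k + 1)

/-- The Vinogradov exponential sum over `A`, with phase `∑ j, α j * x ^ (j + 1)`. -/
noncomputable def vinogradovSum {s k n : ℕ} (A : Finset ℕ) (α : Frequency s k n) : ℂ :=
  ∑ x ∈ A, ZMod.stdAddChar (∑ j, α j * (x : ZMod (s * n ^ k + 1)) ^ ((j : ℕ) + 1))

section Orthogonality

variable {ι : Type*} [Fintype ι] {s k n : ℕ}

/-- The vector of power sums of degrees `1, …, k`, in which the degree `j` has index `j - 1`. -/
def powerSums {A : Type*} [Semiring A] (k : ℕ) (x : ι → A) : Fin k → A :=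
  fun j => ∑ i, x i ^ ((j : ℕ) + 1)

lemma isVinogradovSolution_zmod_iff (hι : Fintype.card ι = s) {x y : ι → ℕ} (hx : ∀ i, x i < n)
    (hy : ∀ i, y i < n) :
    IsVinogradovSolution k (fun i => (x i : ZMod (s * n ^ k + 1))) (fun i => y i) ↔
      IsVinogradovSolution k x y := by
  have sum_lt {z : ι → ℕ} (hz : ∀ i, z i < n) {j : ℕ} (hj : j ∈ Icc 1 k) :
      ∑ i, z i ^ j < s * n ^ k + 1 := by
    rw [Nat.lt_succ_iff, ← hι, ← card_univ, ← smul_eq_mul]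
    exact sum_le_card_nsmul _ _ _ fun i _ => (Nat.pow_le_pow_left (hz i).le j).trans
      (Nat.pow_le_pow_right (Nat.zero_lt_of_lt (hz i)) (mem_Icc.1 hj).2)
  refine forall₂_congr fun j hj => ?_
  rw [← Nat.mod_eq_of_lt (sum_lt hx hj), ← Nat.mod_eq_of_lt (sum_lt hy hj),
    ← ZMod.natCast_eq_natCast_iff']
  push_cast
  rfl

lemma isVinogradovSolution_iff_powerSums_eq {A : Type*} [Semiring A] {x y : ι → A} :
    IsVinogradovSolution k x y ↔ powerSums k x = powerSums k y := by
  rw [funext_iff]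
  refine ⟨fun h j => h _ (mem_Icc.2 ⟨Nat.le_add_left 1 j, j.is_lt⟩), fun h j hj => ?_⟩
  obtain ⟨hj₁, hj₂⟩ := mem_Icc.1 hj
  simpa only [powerSums, Nat.sub_add_cancel hj₁] using h ⟨j - 1, by omega⟩

lemma prod_vinogradovSum [DecidableEq ι] (A : ι → Finset ℕ) (α : Frequency s k n) :
    ∏ i, vinogradovSum (A i) α = ∑ x ∈ Fintype.piFinset A,
      ZMod.stdAddChar (α ⬝ᵥ powerSums k fun i => (x i : ZMod (s * n ^ k + 1))) := by
  simp only [vinogradovSum, prod_univ_sum]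
  refine sum_congr rfl fun x _ => ?_
  rw [← addChar_sum_eq_prod, sum_comm]
  simp only [dotProduct, powerSums, mul_sum]

lemma expect_prod_norm_vinogradovSum_sq (hι : Fintype.card ι = s) {A : ι → Finset ℕ}
    (hA : ∀ i, A i ⊆ range n) :
    𝔼 α : Frequency s k n, ∏ i, ‖vinogradovSum (A i) α‖ ^ 2 = #(vinogradovSolutions k A) := by
  classical
  let ψ (x : ι → ℕ) : Frequency s k n := powerSums k fun i => (x i : ZMod (s * n ^ k + 1))
  have hlt {x : ι → ℕ} (hx : x ∈ Fintype.piFinset A) (i : ι) : x i < n :=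
    mem_range.1 (hA i (Fintype.mem_piFinset.1 hx i))
  have hC : 𝔼 α : Frequency s k n, ∏ i, (‖vinogradovSum (A i) α‖ : ℂ) ^ 2 =
      #(vinogradovSolutions k A) := by
    calc 𝔼 α : Frequency s k n, ∏ i, (‖vinogradovSum (A i) α‖ : ℂ) ^ 2
        = 𝔼 α : Frequency s k n, ∑ z ∈ Fintype.piFinset A ×ˢ Fintype.piFinset A,
            (ZMod.stdAddChar (α ⬝ᵥ (ψ z.1 - ψ z.2)) : ℂ) := by
          refine expect_congr rfl fun α _ => ?_
          rw [prod_pow, ← Complex.ofReal_prod, ← norm_prod, prod_vinogradovSum,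
            ← Complex.mul_conj', map_sum, sum_mul_sum, sum_product]
          refine sum_congr rfl fun x _ => sum_congr rfl fun y _ => ?_
          rw [← AddChar.map_neg_eq_conj, ← AddChar.map_add_eq_mul, dotProduct_sub, sub_eq_add_neg]
      _ = ∑ z ∈ Fintype.piFinset A ×ˢ Fintype.piFinset A,
            if ψ z.1 - ψ z.2 = 0 then (1 : ℂ) else 0 := by
          rw [expect_sum_comm]
          exact sum_congr rfl fun z _ => expect_stdAddChar_dotProduct _
      _ = #(vinogradovSolutions k A) := by
          rw [sum_boole, vinogradovSolutions]
          congr 2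
          refine filter_congr fun z hz => ?_
          obtain ⟨hx, hy⟩ := mem_product.1 hz
          rw [← isVinogradovSolution_zmod_iff hι (hlt hx) (hlt hy),
            isVinogradovSolution_iff_powerSums_eq, sub_eq_zero]
  exact_mod_cast hC

end Orthogonality

section Lifting

variable {ι κ : Type*} [Fintype ι] [Fintype κ] {p q a b c k n η : ℕ}

lemma card_vinogradovSolutions_transversal_le [DecidableEq ι] (hp : p.Prime)
    (hk : Fintype.card ι + q = k) (hkp : k < p) (hac : a < c)
    (hcb : c + a * Fintype.card ι ≤ b * (q + 1) + a) {ξ : ι → ℕ} (hξ : IsTransversal p a ξ)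
    (hη : ∀ i, ¬ ξ i ≡ η [MOD p]) {A : κ → Finset ℕ} (hA : ∀ l, ∀ x ∈ A l, x ≡ η [MOD p ^ b]) :
    #(vinogradovSolutions k (Sum.elim (fun i => residueClass (p ^ (a + 1)) n (ξ i)) A)) ≤
      ∑ ζ ∈ Fintype.piFinset fun i => residueClass (p ^ (a + 1)) (p ^ c) (ξ i),
        #(vinogradovSolutions k (Sum.elim (fun i => residueClass (p ^ c) n (ζ i)) A)) := by
  classical
  subst hk
  refine (card_le_card fun z hz => ?_).trans card_biUnion_le
  simp only [mem_biUnion, mem_vinogradovSolutions, Sum.forall, Sum.elim_inl, Sum.elim_inr,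
    mem_residueClass, Fintype.mem_piFinset] at hz ⊢
  obtain ⟨⟨hx, hxA⟩, ⟨hy, hyA⟩, hxy⟩ := hz
  have hyη i : ¬ z.2 (Sum.inl i) ≡ η [MOD p] := fun h =>
    hη i (((hy i).2.of_dvd (dvd_pow_self p a.succ_ne_zero)).symm.trans h)
  have hlift i : z.1 (Sum.inl i) ≡ z.2 (Sum.inl i) [MOD p ^ c] := by
    rw [← Nat.add_sub_of_le hac.le]
    exact IsTransversal.modEq_of_isVinogradovSolution hp hkp hxy (hξ.congr fun i => (hy i).2) hyη
      (fun i => (hx i).2.trans (hy i).2.symm) (fun l => hA l _ (hxA l)) (fun l => hA l _ (hyA l))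
      (Nat.sub_pos_of_lt hac) (by omega) i
  exact ⟨fun i => z.1 (Sum.inl i) % p ^ c,
    fun i => ⟨Nat.mod_lt _ (pow_pos hp.pos c),
      ((Nat.mod_modEq _ _).of_dvd (pow_dvd_pow p hac)).trans (hx i).2⟩,
    ⟨fun i => ⟨(hx i).1, (Nat.mod_modEq _ _).symm⟩, hxA⟩,
    ⟨fun i => ⟨(hy i).1, (hlift i).symm.trans (Nat.mod_modEq _ _).symm⟩, hyA⟩, hxy⟩

end Lifting

/-- The absolute value of the Vinogradov exponential sum over the residue class of `ξ` modulo
`p ^ a`, Wooley's `|𝔣_a(α; ξ)|`, in the model where the variables run over `[0, p ^ M)`. -/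
noncomputable def congruenceSum {p M s k : ℕ} (a ξ : ℕ) (α : Frequency s k (p ^ M)) : ℝ :=
  ‖vinogradovSum (residueClass (p ^ a) (p ^ M) ξ) α‖

/-- The product of the squared exponential sums over the residue classes of the `ξ i` modulo
`p ^ a`. Over transversal tuples this plays the role of Wooley's conditioned sum `|𝔉_a(α; ξ)|²`. -/
noncomputable def congruenceProd {p M s k : ℕ} {ι : Type*} [Fintype ι] (a : ℕ) (ξ : ι → ℕ)
    (α : Frequency s k (p ^ M)) : ℝ :=
  ∏ i, congruenceSum a (ξ i) α ^ 2

section CongruenceSums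

variable {ι : Type*} [Fintype ι] {p M s k a b : ℕ}

lemma congruenceSum_nonneg (a ξ : ℕ) (α : Frequency s k (p ^ M)) : 0 ≤ congruenceSum a ξ α :=
  norm_nonneg _

lemma congruenceProd_nonneg (a : ℕ) (ξ : ι → ℕ) (α : Frequency s k (p ^ M)) :
    0 ≤ congruenceProd a ξ α :=
  prod_nonneg fun _ _ => sq_nonneg _

lemma congruenceSum_le_sum (hp : 0 < p) (hab : a ≤ b) (ξ : ℕ) (α : Frequency s k (p ^ M)) :
    congruenceSum a ξ α ≤ ∑ ζ ∈ residueClass (p ^ a) (p ^ b) ξ, congruenceSum b ζ α := by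
  rw [congruenceSum, vinogradovSum, sum_residueClass (pow_dvd_pow p hab) (pow_pos hp b)]
  exact norm_sum_le _ _

lemma expect_congruenceSum_pow (a ξ : ℕ) :
    𝔼 α : Frequency s k (p ^ M), congruenceSum a ξ α ^ (2 * s) =
      #(vinogradovSolutions k fun _ : Fin s => residueClass (p ^ a) (p ^ M) ξ) := by
  rw [← expect_prod_norm_vinogradovSum_sq (Fintype.card_fin s)
    fun _ x hx => mem_range.2 (mem_residueClass.1 hx).1]
  refine expect_congr rfl fun α _ => ?_
  rw [prod_const, card_univ, Fintype.card_fin, ← pow_mul, congruenceSum]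

lemma expect_congruenceSum_pow_le (hp : 0 < p) (ha : a ≤ M) (ξ : ℕ) :
    𝔼 α : Frequency s k (p ^ M), congruenceSum a ξ α ^ (2 * s) ≤
      vinogradovCount s k (p ^ (M - a)) := by
  rw [expect_congruenceSum_pow, Nat.cast_le, ← Nat.pow_div ha hp]
  exact card_vinogradovSolutions_residueClass_le (pow_pos hp a) (pow_dvd_pow p ha) ξ

lemma expect_congruenceSum_zero_pow :
    𝔼 α : Frequency s k (p ^ M), congruenceSum 0 0 α ^ (2 * s) = vinogradovCount s k (p ^ M) := by
  have hrange : residueClass (p ^ 0) (p ^ M) 0 = range (p ^ M) := by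
    ext x
    simp only [mem_residueClass, pow_zero, Nat.modEq_one, and_true, mem_range]
  rw [expect_congruenceSum_pow, hrange, vinogradovCount]

lemma card_residueClass_pow_succ (hp : 0 < p) (b η : ℕ) :
    #(residueClass (p ^ b) (p ^ (b + 1)) η) = p := by
  rw [card_residueClass (pow_pos hp b) (pow_dvd_pow p b.le_succ), pow_succ,
    Nat.mul_div_cancel_left _ (pow_pos hp b)]

lemma isTransversal_embedding {ι : Type*} {η : ℕ}
    (c : ι ↪ residueClass (p ^ b) (p ^ (b + 1)) η) : IsTransversal p b fun i => (c i : ℕ) := by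
  have hc i := mem_residueClass.1 (c i).2
  refine ⟨fun i j => (hc i).2.trans (hc j).2.symm, fun i j hij h => hij (c.injective ?_)⟩
  exact Subtype.ext (h.eq_of_lt_of_lt (hc i).1 (hc j).1)

lemma expect_congruenceProd_mul_congruenceProd_pow {q : ℕ} (hs : Fintype.card ι * (q + 1) = s)
    (a b : ℕ) (ξ ν : ι → ℕ) :
    𝔼 α : Frequency s k (p ^ M), congruenceProd a ξ α * congruenceProd b ν α ^ q =
      #(vinogradovSolutions k (Sum.elim (fun i => residueClass (p ^ a) (p ^ M) (ξ i))
        fun l : ι × Fin q => residueClass (p ^ b) (p ^ M) (ν l.1))) := by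
  rw [← expect_prod_norm_vinogradovSum_sq (s := s)]
  · refine expect_congr rfl fun α _ => ?_
    simp only [congruenceProd, congruenceSum, Fintype.prod_sum_type, Sum.elim_inl, Sum.elim_inr,
      Fintype.prod_prod_type, prod_const, card_univ, Fintype.card_fin, prod_pow]
    rw [mul_pow, pow_right_comm]
  · rw [Fintype.card_sum, Fintype.card_prod, Fintype.card_fin, ← hs, mul_add_one, add_comm]
  · rintro (i | l) x hx <;> exact mem_range.2 (mem_residueClass.1 hx).1

end CongruenceSums

section RealInequalities

lemma succ_mul_mul_pow_le {u v : ℝ} (hu : 0 ≤ u) (hv : 0 ≤ v) (n : ℕ) :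
    (n + 1) * (u * v ^ n) ≤ u ^ (n + 1) + n * v ^ (n + 1) := by
  rcases hv.eq_or_lt with rfl | hv
  · rcases Nat.eq_zero_or_pos n with rfl | hn
    · simp
    · simpa [hn.ne'] using pow_nonneg hu (n + 1)
  have hbernoulli : 1 + ((n + 1 : ℕ) : ℝ) * (u / v - 1) ≤ (u / v) ^ (n + 1) :=
    one_add_mul_sub_le_pow (by linarith [div_nonneg hu hv.le]) (n + 1)
  have hscaled := mul_le_mul_of_nonneg_right hbernoulli (pow_pos hv (n + 1)).le
  rw [← mul_pow, div_mul_cancel₀ u hv.ne'] at hscaled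
  have hexpand : (1 + ((n + 1 : ℕ) : ℝ) * (u / v - 1)) * v ^ (n + 1) =
      (n + 1) * (u * v ^ n) - n * v ^ (n + 1) := by
    push_cast
    field_simp
    ring
  linarith

lemma prod_le_sum_pow_card {ι : Type*} [Fintype ι] [Nonempty ι] {f : ι → ℝ} (hf : ∀ i, 0 ≤ f i) :
    ∏ i, f i ≤ ∑ i, f i ^ Fintype.card ι := by
  obtain ⟨m, -, hm⟩ := exists_max_image univ f univ_nonempty
  calc ∏ i, f i ≤ ∏ _i : ι, f m := prod_le_prod (fun i _ => hf i) fun i _ => hm i (mem_univ i)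
    _ = f m ^ Fintype.card ι := by rw [prod_const, card_univ]
    _ ≤ ∑ i, f i ^ Fintype.card ι :=
        single_le_sum (f := fun i => f i ^ Fintype.card ι) (fun i _ => pow_nonneg (hf i) _)
          (mem_univ m)

variable {α ι : Type*} [Fintype ι] {S : Finset α} {f : α → ℝ}

lemma exists_sum_le_card_mul_or_exists_embedding (hS : S.Nonempty) (hf : ∀ i, 0 ≤ f i) :
    (∃ i ∈ S, ∑ j ∈ S, f j ≤ Fintype.card ι * f i) ∨
      ∃ c : ι ↪ S, ∀ l, ∑ j ∈ S, f j ≤ (#S : ℝ) ^ 2 * f (c l) := by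
  classical
  obtain ⟨m, hmS, hm⟩ := exists_max_image S f hS
  have hS₀ : (0 : ℝ) < #S := mod_cast hS.card_pos
  set B := S.filter fun i => f m ≤ #S * f i
  by_cases hι : Fintype.card ι ≤ #B
  · right
    obtain ⟨e⟩ : Nonempty (ι ↪ B) :=
      Function.Embedding.nonempty_of_card_le (by rwa [Fintype.card_coe])
    refine ⟨e.trans (Function.Embedding.subtypeMap (.refl α) fun i hi => (mem_filter.1 hi).1),
      fun l => ?_⟩
    calc ∑ j ∈ S, f j ≤ #S * f m := by simpa only [nsmul_eq_mul] using sum_le_card_nsmul S f _ hm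
      _ ≤ #S * (#S * f (e l)) := mul_le_mul_of_nonneg_left (mem_filter.1 (e l).2).2 hS₀.le
      _ = (#S : ℝ) ^ 2 * f (e l) := by ring
  · left
    refine ⟨m, hmS, ?_⟩
    have hlarge : ∑ j ∈ B, f j ≤ #B * f m := by
      simpa only [nsmul_eq_mul] using
        sum_le_card_nsmul B f (f m) fun i hi => hm i (mem_filter.1 hi).1
    have hsmall : ∑ j ∈ S with ¬ f m ≤ #S * f j, f j ≤ f m := by
      calc ∑ j ∈ S with ¬ f m ≤ #S * f j, f j
          ≤ #{j ∈ S | ¬ f m ≤ #S * f j} • (f m / #S) := by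
            refine sum_le_card_nsmul _ _ _ fun j hj => ?_
            rw [le_div_iff₀' hS₀]
            exact (not_le.1 (mem_filter.1 hj).2).le
        _ ≤ #S • (f m / #S) :=
            nsmul_le_nsmul_left (div_nonneg (hf m) hS₀.le) (card_filter_le _ _)
        _ = f m := by rw [nsmul_eq_mul, mul_div_cancel₀ _ hS₀.ne']
    have hcard : (#B : ℝ) + 1 ≤ Fintype.card ι := mod_cast not_le.1 hι
    calc ∑ j ∈ S, f j = ∑ j ∈ B, f j + ∑ j ∈ S with ¬ f m ≤ #S * f j, f j :=
          (sum_filter_add_sum_filter_not S _ f).symm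
      _ ≤ (#B + 1) * f m := by linarith
      _ ≤ Fintype.card ι * f m := mul_le_mul_of_nonneg_right hcard (hf m)

lemma sum_pow_le_sum_pow_add_sum_embedding (hS : S.Nonempty) (hf : ∀ i, 0 ≤ f i)
    (e : ι → ℕ) :
    (∑ j ∈ S, f j) ^ (∑ l, e l) ≤
      (Fintype.card ι : ℝ) ^ (∑ l, e l) * ∑ i ∈ S, f i ^ (∑ l, e l) +
        (#S : ℝ) ^ (2 * ∑ l, e l) * ∑ c : ι ↪ S, ∏ l, f (c l) ^ e l := by
  classical
  set n := ∑ l, e l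
  have hsum : 0 ≤ ∑ j ∈ S, f j := sum_nonneg fun i _ => hf i
  have hprod (c : ι ↪ S) : 0 ≤ ∏ l, f (c l) ^ e l := prod_nonneg fun l _ => pow_nonneg (hf _) _
  rcases exists_sum_le_card_mul_or_exists_embedding (ι := ι) hS hf with ⟨i, hi, hle⟩ | ⟨c, hle⟩
  · refine le_add_of_le_of_nonneg ?_ (mul_nonneg (by positivity) (sum_nonneg fun c _ => hprod c))
    calc (∑ j ∈ S, f j) ^ n ≤ (Fintype.card ι * f i) ^ n := pow_le_pow_left₀ hsum hle n
      _ = (Fintype.card ι : ℝ) ^ n * f i ^ n := mul_pow _ _ _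
      _ ≤ (Fintype.card ι : ℝ) ^ n * ∑ i ∈ S, f i ^ n := by
          gcongr
          exact single_le_sum (f := fun i => f i ^ n) (fun i _ => pow_nonneg (hf i) n) hi
  · refine le_add_of_nonneg_of_le
      (mul_nonneg (by positivity) (sum_nonneg fun i _ => pow_nonneg (hf i) n)) ?_
    calc (∑ j ∈ S, f j) ^ n = ∏ l, (∑ j ∈ S, f j) ^ e l := (prod_pow_eq_pow_sum _ _ _).symm
      _ ≤ ∏ l, ((#S : ℝ) ^ 2 * f (c l)) ^ e l :=
          prod_le_prod (fun l _ => pow_nonneg hsum _) fun l _ => pow_le_pow_left₀ hsum (hle l) _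
      _ = (#S : ℝ) ^ (2 * n) * ∏ l, f (c l) ^ e l := by
          simp only [mul_pow, prod_mul_distrib, prod_pow_eq_pow_sum, pow_mul, n]
      _ ≤ (#S : ℝ) ^ (2 * n) * ∑ c : ι ↪ S, ∏ l, f (c l) ^ e l := by
          gcongr
          exact single_le_sum (f := fun c : ι ↪ S => ∏ l, f (c l) ^ e l) (fun c _ => hprod c)
            (mem_univ c)

end RealInequalities

section Expectation

variable {Ω ι : Type*} [Fintype Ω] [Fintype ι]

lemma expect_mul_mul_pow_le {w u v : Ω → ℝ} (hw : ∀ ω, 0 ≤ w ω) (hu : ∀ ω, 0 ≤ u ω)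
    (hv : ∀ ω, 0 ≤ v ω) {P B x y : ℝ} (hP : 0 < P) {n : ℕ}
    (hux : 𝔼 ω, w ω * u ω ^ (n + 1) ≤ B * P ^ x) (hvy : 𝔼 ω, w ω * v ω ^ (n + 1) ≤ B * P ^ y) :
    𝔼 ω, w ω * (u ω * v ω ^ n) ≤ B * P ^ ((x + n * y) / (n + 1)) := by
  -- Young's inequality is applied after rescaling `u` and `v` so as to balance the two moments.
  set s := P ^ (x / (n + 1)) with hs
  set t := P ^ (y / (n + 1)) with ht
  have hs₀ : 0 < s := Real.rpow_pos_of_pos hP _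
  have ht₀ : 0 < t := Real.rpow_pos_of_pos hP _
  have rpow_div_pow (z : ℝ) : (P ^ (z / (n + 1))) ^ (n + 1) = P ^ z := by
    rw [← Real.rpow_mul_natCast hP.le]
    congr 1
    push_cast
    field_simp
  have hst : s * t ^ n = P ^ ((x + n * y) / (n + 1)) := by
    rw [hs, ht, ← Real.rpow_mul_natCast hP.le, ← Real.rpow_add hP]
    congr 1
    field_simp
  have hyoung ω : w ω * (u ω * v ω ^ n) ≤
      s * t ^ n / (n + 1) * (w ω * u ω ^ (n + 1) / P ^ x + n * (w ω * v ω ^ (n + 1) / P ^ y)) := by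
    have h := mul_le_mul_of_nonneg_left (succ_mul_mul_pow_le (div_nonneg (hu ω) hs₀.le)
      (div_nonneg (hv ω) ht₀.le) n) (mul_nonneg (hw ω) (by positivity : 0 ≤ s * t ^ n / (n + 1)))
    simp only [div_pow, rpow_div_pow, hs, ht] at h ⊢
    refine le_of_eq_of_le ?_ (h.trans_eq (by ring))
    field_simp
  calc 𝔼 ω, w ω * (u ω * v ω ^ n)
      ≤ 𝔼 ω, s * t ^ n / (n + 1) *
          (w ω * u ω ^ (n + 1) / P ^ x + n * (w ω * v ω ^ (n + 1) / P ^ y)) :=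
        expect_le_expect fun ω _ => hyoung ω
    _ = s * t ^ n / (n + 1) * ((𝔼 ω, w ω * u ω ^ (n + 1)) / P ^ x +
          n * ((𝔼 ω, w ω * v ω ^ (n + 1)) / P ^ y)) := by
        rw [← mul_expect, expect_add_distrib, ← mul_expect, expect_div, expect_div]
    _ ≤ s * t ^ n / (n + 1) * (B + n * B) := by
        have := (div_le_iff₀ (Real.rpow_pos_of_pos hP x)).2 hux
        have := (div_le_iff₀ (Real.rpow_pos_of_pos hP y)).2 hvy
        gcongr
    _ = B * P ^ ((x + n * y) / (n + 1)) := by rw [← hst]; field_simp; ring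

lemma expect_prod_mul_le [Nonempty ι] {f : ι → Ω → ℝ} {g : Ω → ℝ} (hf : ∀ i ω, 0 ≤ f i ω)
    (hg : ∀ ω, 0 ≤ g ω) {B : ℝ} (h : ∀ i, 𝔼 ω, f i ω ^ Fintype.card ι * g ω ≤ B) :
    𝔼 ω, (∏ i, f i ω) * g ω ≤ Fintype.card ι * B := by
  calc 𝔼 ω, (∏ i, f i ω) * g ω ≤ 𝔼 ω, ∑ i, f i ω ^ Fintype.card ι * g ω := by
        refine expect_le_expect fun ω _ => ?_
        rw [← sum_mul]
        exact mul_le_mul_of_nonneg_right (prod_le_sum_pow_card fun i => hf i ω) (hg ω)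
    _ = ∑ i, 𝔼 ω, f i ω ^ Fintype.card ι * g ω := expect_sum_comm _ _ _
    _ ≤ ∑ _i : ι, B := sum_le_sum fun i _ => h i
    _ = Fintype.card ι * B := by rw [sum_const, card_univ, nsmul_eq_mul]

variable {α : Type*} {S : Finset α}

lemma expect_mul_pow_le_of_embedding (hS : S.Nonempty) {T g : Ω → ℝ}
    {f : α → Ω → ℝ} (hT : ∀ ω, 0 ≤ T ω) (hf : ∀ i ω, 0 ≤ f i ω) (hg : ∀ ω, 0 ≤ g ω)
    (hgf : ∀ ω, g ω ≤ ∑ i ∈ S, f i ω) {e : ι → ℕ} {n : ℕ} (hn : ∑ l, e l = n) {u v : ℝ}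
    (hv : 0 ≤ v) (hfu : ∀ i ∈ S, 𝔼 ω, T ω * f i ω ^ n ≤ u)
    (hfv : ∀ c : ι ↪ S, 𝔼 ω, T ω * ∏ l, f (c l) ω ^ e l ≤ v) :
    𝔼 ω, T ω * g ω ^ n ≤
      (Fintype.card ι : ℝ) ^ n * (#S * u) + (#S : ℝ) ^ (2 * n + Fintype.card ι) * v := by
  classical
  subst hn
  have hcard : (Fintype.card (ι ↪ S) : ℝ) ≤ (#S : ℝ) ^ Fintype.card ι := by
    rw [Fintype.card_embedding_eq, Fintype.card_coe]
    exact_mod_cast Nat.descFactorial_le_pow _ _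
  set n := ∑ l, e l
  calc 𝔼 ω, T ω * g ω ^ n
      ≤ 𝔼 ω, ((Fintype.card ι : ℝ) ^ n * ∑ i ∈ S, T ω * f i ω ^ n +
          (#S : ℝ) ^ (2 * n) * ∑ c : ι ↪ S, T ω * ∏ l, f (c l) ω ^ e l) := by
        refine expect_le_expect fun ω _ => (mul_le_mul_of_nonneg_left
          ((pow_le_pow_left₀ (hg ω) (hgf ω) _).trans
            (sum_pow_le_sum_pow_add_sum_embedding hS (hf · ω) e)) (hT ω)).trans_eq ?_
        rw [← mul_sum, ← mul_sum]
        ring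
    _ = (Fintype.card ι : ℝ) ^ n * ∑ i ∈ S, 𝔼 ω, T ω * f i ω ^ n +
          (#S : ℝ) ^ (2 * n) * ∑ c : ι ↪ S, 𝔼 ω, T ω * ∏ l, f (c l) ω ^ e l := by
        rw [expect_add_distrib, ← mul_expect, ← mul_expect, expect_sum_comm, expect_sum_comm]
    _ ≤ (Fintype.card ι : ℝ) ^ n * (#S * u) +
          (#S : ℝ) ^ (2 * n) * ((#S : ℝ) ^ Fintype.card ι * v) := by
        gcongr
        · simpa only [nsmul_eq_mul] using sum_le_card_nsmul S _ _ hfu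
        · refine (sum_le_card_nsmul univ _ v fun c _ => hfv c).trans ?_
          rw [nsmul_eq_mul, card_univ]
          exact mul_le_mul_of_nonneg_right hcard hv
    _ = (Fintype.card ι : ℝ) ^ n * (#S * u) + (#S : ℝ) ^ (2 * n + Fintype.card ι) * v := by
        rw [pow_add, mul_assoc]

lemma expect_mul_pow_le_card_pow_mul {T g : Ω → ℝ} {f : α → Ω → ℝ} (hT : ∀ ω, 0 ≤ T ω)
    (hf : ∀ i ω, 0 ≤ f i ω) (hg : ∀ ω, 0 ≤ g ω) (hgf : ∀ ω, g ω ≤ ∑ i ∈ S, f i ω) {n : ℕ} {u : ℝ}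
    (hfu : ∀ i ∈ S, 𝔼 ω, T ω * f i ω ^ (n + 1) ≤ u) :
    𝔼 ω, T ω * g ω ^ (n + 1) ≤ (#S : ℝ) ^ (n + 1) * u := by
  calc 𝔼 ω, T ω * g ω ^ (n + 1)
      ≤ 𝔼 ω, (#S : ℝ) ^ n * ∑ i ∈ S, T ω * f i ω ^ (n + 1) := by
        refine expect_le_expect fun ω _ => ?_
        rw [← mul_sum, mul_left_comm]
        exact mul_le_mul_of_nonneg_left ((pow_le_pow_left₀ (hg ω) (hgf ω) _).trans
          (pow_sum_le_card_mul_sum_pow (fun i _ => hf i ω) n)) (hT ω)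
    _ = (#S : ℝ) ^ n * ∑ i ∈ S, 𝔼 ω, T ω * f i ω ^ (n + 1) := by
        rw [← mul_expect, expect_sum_comm]
    _ ≤ (#S : ℝ) ^ n * (#S * u) := by
        gcongr
        simpa only [nsmul_eq_mul] using sum_le_card_nsmul S _ _ hfu
    _ = (#S : ℝ) ^ (n + 1) * u := by ring

end Expectation

/-- The hypotheses on the parameters of the mixed mean values: `ξ` is a transversal tuple modulo
`p ^ a`, and `η` is a residue modulo the much higher power `p ^ b` which is distinct modulo `p` from
the entries of `ξ`. -/
structure IsConditioned {ι : Type*} (p q a b : ℕ) (ξ : ι → ℕ) (η : ℕ) : Prop where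
  one_le : 1 ≤ b
  mul_le : q * a ≤ b
  isTransversal : IsTransversal p a ξ
  not_modEq : ∀ i, ¬ ξ i ≡ η [MOD p]

/-- Wooley's mixed mean value `K_{a,b}(X; ξ, η)` for the system of degree `R + q` in
`2 * R * (q + 1)` variables from `[0, p ^ M)`: `2 * R` variables are transversal and the other
`2 * R * q` lie in the residue class of `η` modulo `p ^ b`. -/
noncomputable def mixedMean (p M R q a b : ℕ) (ξ : Fin R → ℕ) (η : ℕ) : ℝ :=
  𝔼 α : Frequency (R * (q + 1)) (R + q) (p ^ M),
    congruenceProd (a + 1) ξ α * congruenceSum b η α ^ (2 * (R * q))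

/-- Wooley's mean value `I_{a,b}(X; ξ, ν)`: as in `mixedMean`, but with the `2 * R * q` variables
distributed over `q` copies of the transversal tuple `ν` modulo `p ^ b`. -/
noncomputable def transversalMean (p M R q a b : ℕ) (ξ ν : Fin R → ℕ) : ℝ :=
  𝔼 α : Frequency (R * (q + 1)) (R + q) (p ^ M),
    congruenceProd (a + 1) ξ α * congruenceProd (b + 1) ν α ^ q

/-- The bound `J_{s,k}(X) ≪ X ^ E` along the powers `X = p ^ m`. -/
def CountBound (p s k : ℕ) (E : ℝ) : Prop :=
  ∃ C : ℝ, 0 < C ∧ ∀ m : ℕ, (vinogradovCount s k (p ^ m) : ℝ) ≤ C * (p : ℝ) ^ (m * E)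

/-- A bound for the mixed mean values that goes with the exponent `(q + 1) * (R + Λ)` in
`CountBound`. With `c = 0` this is what Hölder's inequality gives, so that `p ^ (c * b)` measures
the saving over it. -/
def MixedBound (p R q : ℕ) (Λ c : ℝ) (K : ℕ) : Prop :=
  ∃ D : ℝ, 0 < D ∧ ∀ (M a b : ℕ) (ξ : Fin R → ℕ) (η : ℕ), IsConditioned p q a b ξ η →
    K * b ≤ M → mixedMean p M R q a b ξ η ≤
      D * (p : ℝ) ^ (M * ((q + 1) * (R + Λ)) - R * a - (R * q + c) * b)

section MeanValues

variable {p M R q a b b' k K η : ℕ} {Λ c C E : ℝ} {ξ ν : Fin R → ℕ}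

lemma IsConditioned.succ_le (hq : 2 ≤ q) (h : IsConditioned p q a b ξ η) : a + 1 ≤ b := by
  have := h.one_le
  have := (Nat.mul_le_mul_right a hq).trans h.mul_le
  omega

lemma expect_congruenceSum_pow_le_rpow {s : ℕ} (hp : 0 < p)
    (hC : ∀ m : ℕ, (vinogradovCount s k (p ^ m) : ℝ) ≤ C * (p : ℝ) ^ (m * E)) (ha : a ≤ M) (ζ : ℕ) :
    𝔼 α : Frequency s k (p ^ M), congruenceSum a ζ α ^ (2 * s) ≤
      C * (p : ℝ) ^ (((M : ℝ) - a) * E) := by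
  rw [← Nat.cast_sub ha]
  exact (expect_congruenceSum_pow_le hp ha ζ).trans (hC _)

lemma expect_congruenceProd_mul_le {s : ℕ} (hR : 1 ≤ R) {g : Frequency s k (p ^ M) → ℝ}
    (hg : ∀ α, 0 ≤ g α) {B : ℝ}
    (h : ∀ i, 𝔼 α, congruenceSum a (ξ i) α ^ (2 * R) * g α ≤ B) :
    𝔼 α, congruenceProd a ξ α * g α ≤ R * B := by
  have : NeZero R := ⟨Nat.one_le_iff_ne_zero.1 hR⟩
  simpa only [Fintype.card_fin, congruenceProd] using expect_prod_mul_le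
    (fun i α => sq_nonneg (congruenceSum a (ξ i) α)) hg
    fun i => by simpa only [Fintype.card_fin, ← pow_mul] using h i

lemma expect_congruenceProd_pow_le_rpow (hp : 0 < p) (hR : 1 ≤ R)
    (hC : ∀ m : ℕ, (vinogradovCount (R * (q + 1)) k (p ^ m) : ℝ) ≤ C * (p : ℝ) ^ (m * E))
    (hb : b ≤ M) (ν : Fin R → ℕ) :
    𝔼 α : Frequency (R * (q + 1)) k (p ^ M), congruenceProd b ν α ^ (q + 1) ≤
      R * C * (p : ℝ) ^ (((M : ℝ) - b) * E) := by
  have : NeZero R := ⟨Nat.one_le_iff_ne_zero.1 hR⟩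
  have h := expect_prod_mul_le
    (f := fun l (α : Frequency (R * (q + 1)) k (p ^ M)) => (congruenceSum b (ν l) α ^ 2) ^ (q + 1))
    (g := fun _ => 1) (fun _ _ => by positivity) (fun _ => zero_le_one) fun l =>
      le_of_eq_of_le (expect_congr rfl fun α _ => by rw [Fintype.card_fin]; ring)
        (expect_congruenceSum_pow_le_rpow hp hC hb (ν l))
  simpa only [mul_one, Fintype.card_fin, ← mul_assoc, congruenceProd, ← prod_pow] using h

lemma mixedBound_zero (hp : 1 < p) (hR : 1 ≤ R) (hq : 2 ≤ q) (hΛ : 0 ≤ Λ)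
    (hJ : CountBound p (R * (q + 1)) (R + q) ((q + 1) * (R + Λ))) :
    MixedBound p R q Λ 0 1 := by
  obtain ⟨C, hC, hJ⟩ := hJ
  have hp₁ : (1 : ℝ) ≤ p := mod_cast hp.le
  have hp₀ : (0 : ℝ) < p := zero_lt_one.trans_le hp₁
  refine ⟨R * C, by positivity, fun M a b ξ η h hbM => ?_⟩
  rw [one_mul] at hbM
  have haM : a + 1 ≤ M := (h.succ_le hq).trans hbM
  rw [mixedMean, mul_assoc (R : ℝ)]
  refine expect_congruenceProd_mul_le hR (fun α => pow_nonneg (congruenceSum_nonneg b η α) _)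
    fun i => ?_
  have hholder := expect_mul_mul_pow_le (w := fun _ => 1) (n := q) (fun _ => zero_le_one)
    (fun α => pow_nonneg (congruenceSum_nonneg (a + 1) (ξ i) α) (2 * R))
    (fun α => pow_nonneg (congruenceSum_nonneg b η α) (2 * R)) hp₀
    (by simpa only [one_mul, ← pow_mul, mul_assoc] using
      expect_congruenceSum_pow_le_rpow (by omega) hJ haM (ξ i))
    (by simpa only [one_mul, ← pow_mul, mul_assoc] using
      expect_congruenceSum_pow_le_rpow (by omega) hJ hbM η)
  simp only [one_mul, ← pow_mul, mul_assoc 2 R q] at hholder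
  refine hholder.trans ?_
  gcongr
  have hexponent : ((M - (a + 1 : ℕ)) * ((q + 1) * (R + Λ)) +
      q * ((M - b) * ((q + 1) * (R + Λ)))) / (q + 1) =
        M * ((q + 1) * (R + Λ)) - (a + 1) * (R + Λ) - q * b * (R + Λ) := by
    push_cast
    field_simp
    ring
  have : 0 ≤ a * Λ + (R + Λ) + q * b * Λ := by positivity
  linarith

lemma transversalMean_le_sum (hp : p.Prime) (hpRq : R + q < p)
    (hR : R ≤ q + 1) (hq : 2 ≤ q) (h : IsConditioned p q a b ξ η)
    (hν : ∀ l, ν l ≡ η [MOD p ^ b]) :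
    transversalMean p M R q a b ξ ν ≤
      ∑ ζ ∈ Fintype.piFinset fun i => residueClass (p ^ (a + 1)) (p ^ (q * b)) (ξ i),
        𝔼 α : Frequency (R * (q + 1)) (R + q) (p ^ M),
          congruenceProd (q * b) ζ α * congruenceProd (b + 1) ν α ^ q := by
  have hRq : Fintype.card (Fin R) * (q + 1) = R * (q + 1) := by rw [Fintype.card_fin]
  have hab := h.succ_le hq
  have hbq := Nat.le_mul_of_pos_left b (by omega : 0 < q)
  have haR := Nat.mul_le_mul_left a hR
  have hqa := h.mul_le
  simp only [transversalMean, expect_congruenceProd_mul_congruenceProd_pow hRq]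
  rw [← Nat.cast_sum, Nat.cast_le]
  refine card_vinogradovSolutions_transversal_le (q := q) (b := b) (η := η) hp
    (by rw [Fintype.card_fin]) hpRq (by omega) ?_ h.isTransversal h.not_modEq fun l x hx =>
      ((mem_residueClass.1 hx).2.of_dvd (pow_dvd_pow p b.le_succ)).trans (hν l.1)
  rw [Fintype.card_fin]
  linarith

lemma card_piFinset_residueClass_pow (hp : 0 < p) (hab : a ≤ b) (ξ : Fin R → ℕ) :
    #(Fintype.piFinset fun i => residueClass (p ^ a) (p ^ b) (ξ i)) = p ^ ((b - a) * R) := by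
  simp only [Fintype.card_piFinset, card_residueClass (pow_pos hp a) (pow_dvd_pow p hab),
    Nat.pow_div hab hp, prod_const, card_univ, Fintype.card_fin, pow_mul]

lemma expect_congruenceSum_pow_mul_congruenceProd_pow_le {B x y : ℝ} (hp : 0 < p)
    (hq : 1 ≤ q) (hmixed : mixedMean p M R q b b' ν η ≤ B * (p : ℝ) ^ x)
    (hprod : 𝔼 α : Frequency (R * (q + 1)) (R + q) (p ^ M), congruenceProd (b + 1) ν α ^ (q + 1) ≤
      B * (p : ℝ) ^ y) :
    𝔼 α : Frequency (R * (q + 1)) (R + q) (p ^ M),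
      congruenceSum b' η α ^ (2 * R) * congruenceProd (b + 1) ν α ^ q ≤
        B * (p : ℝ) ^ ((x + (q - 1) * y) / q) := by
  obtain ⟨n, rfl⟩ := Nat.exists_eq_add_of_le' hq
  have hholder := expect_mul_mul_pow_le (n := n) (congruenceProd_nonneg (b + 1) ν)
    (fun α => pow_nonneg (congruenceSum_nonneg b' η α) (2 * R)) (congruenceProd_nonneg (b + 1) ν)
    (Nat.cast_pos.2 hp) (by simpa only [mixedMean, ← pow_mul, mul_assoc] using hmixed)
    (by simpa only [← pow_succ'] using hprod)
  rw [Nat.cast_add_one, add_sub_cancel_right]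
  exact le_of_eq_of_le (expect_congr rfl fun α _ => by ring) hholder

lemma transversalMean_exponent_le (hq : 2 ≤ q) (hΛ : 0 ≤ Λ) (A : ℝ) (a b : ℕ) :
    (q * b - (a + 1)) * R + (A - R * b - (R * q + c) * (q * b) +
      (q - 1) * (A - (b + 1) * ((q + 1) * (R + Λ)))) / q ≤
        A - R * a - (R * q + (c + Λ)) * b := by
  have hq₀ : (2 : ℝ) ≤ q := mod_cast hq
  have hexponent : (q * b - (a + 1)) * R + (A - R * b - (R * q + c) * (q * b) +
      (q - 1) * (A - (b + 1) * ((q + 1) * (R + Λ)))) / q =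
        A - R * a - (R * q + c) * b - R - (q - 1 / q) * (R + (b + 1) * Λ) := by
    field_simp
    ring
  have hgain : 1 ≤ q - 1 / (q : ℝ) := by
    have : 1 / (q : ℝ) ≤ 1 := by rw [div_le_one (by positivity)]; linarith
    linarith
  have := mul_le_mul_of_nonneg_right hgain (by positivity : 0 ≤ R + (b + 1) * Λ)
  linarith [R.cast_nonneg (α := ℝ)]

lemma MixedBound.exists_transversalMean_le (hp : p.Prime) (hpRq : R + q < p) (hR₁ : 1 ≤ R)
    (hR : R ≤ q + 1) (hq : 2 ≤ q) (hK : 1 ≤ K) (hΛ : 0 ≤ Λ)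
    (hJ : CountBound p (R * (q + 1)) (R + q) ((q + 1) * (R + Λ))) (hB : MixedBound p R q Λ c K) :
    ∃ A : ℝ, 0 < A ∧ ∀ (M a b : ℕ) (ξ ν : Fin R → ℕ) (η : ℕ), IsConditioned p q a b ξ η →
      K * (q * b) ≤ M → IsTransversal p b ν → (∀ l, ν l ≡ η [MOD p ^ b]) →
        transversalMean p M R q a b ξ ν ≤
          A * (p : ℝ) ^ (M * ((q + 1) * (R + Λ)) - R * a - (R * q + (c + Λ)) * b) := by
  obtain ⟨C, -, hJ⟩ := hJ
  obtain ⟨D, hD, hB⟩ := hB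
  have hp₁ : (1 : ℝ) ≤ p := mod_cast hp.one_le
  have hp₀ : (0 : ℝ) < p := zero_lt_one.trans_le hp₁
  refine ⟨R * max D (R * C), by positivity, fun M a b ξ ν η h hKM hν hνη => ?_⟩
  have hab := h.succ_le hq
  have hbq : b + 1 ≤ q * b := by linarith [Nat.mul_le_mul_right b hq, h.one_le]
  have hqM : q * b ≤ M := (Nat.le_mul_of_pos_left _ hK).trans hKM
  have hlifted (ζ : Fin R → ℕ) (hζ : ∀ i, ζ i ≡ ξ i [MOD p ^ (a + 1)]) :=
    expect_congruenceProd_mul_le (a := q * b) (ξ := ζ) hR₁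
      (fun α => pow_nonneg (congruenceProd_nonneg (b + 1) ν α) q) fun i => by
        have hζν l : ¬ ν l ≡ ζ i [MOD p] := fun hl => h.not_modEq i <|
          ((hζ i).symm.of_dvd (dvd_pow_self p a.succ_ne_zero)).trans <| hl.symm.trans <|
            (hνη l).of_dvd (dvd_pow_self p (by have := h.one_le; omega))
        exact expect_congruenceSum_pow_mul_congruenceProd_pow_le hp.pos (by omega)
          ((hB M b (q * b) ν (ζ i) ⟨by omega, le_rfl, hν, hζν⟩ hKM).trans
            (mul_le_mul_of_nonneg_right (le_max_left _ (R * C)) (by positivity)))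
          ((expect_congruenceProd_pow_le_rpow hp.pos hR₁ hJ (by omega) ν).trans
            (mul_le_mul_of_nonneg_right (le_max_right D _) (by positivity)))
  refine (transversalMean_le_sum hp hpRq hR hq h hνη).trans ((sum_le_card_nsmul _ _ _
    fun ζ hζ => hlifted ζ fun i => (mem_residueClass.1 (Fintype.mem_piFinset.1 hζ i)).2).trans ?_)
  rw [card_piFinset_residueClass_pow hp.pos (by omega), nsmul_eq_mul, Nat.cast_pow,
    ← Real.rpow_natCast, ← mul_assoc (R : ℝ), mul_left_comm, ← Real.rpow_add hp₀]
  gcongr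
  convert transversalMean_exponent_le hq hΛ (M * ((q + 1) * (R + Λ))) a b using 1
  rw [Nat.cast_mul, Nat.cast_sub (by omega)]
  push_cast
  ring

end MeanValues

section Iteration

variable {p M R q K : ℕ} {Λ c : ℝ}

lemma mul_rpow_sub_two_add_mul_rpow_le {P G A B z : ℝ} (hP : 0 < P) (hB : 0 ≤ B) (hG : 2 * G ≤ P)
    (hA : 2 * A ≤ B) : G * (P * (B * P ^ (z - 2))) + A * P ^ z ≤ B * P ^ z := by
  have hshift : G * (P * (B * P ^ (z - 2))) = 2 * G / P * (B / 2 * P ^ z) := by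
    rw [Real.rpow_sub hP, Real.rpow_ofNat]
    field_simp
  calc G * (P * (B * P ^ (z - 2))) + A * P ^ z ≤ 1 * (B / 2 * P ^ z) + B / 2 * P ^ z := by
        rw [hshift]
        gcongr
        · rwa [div_le_one hP]
        · linarith
    _ = B * P ^ z := by ring

lemma mixedMean_le_mul_rpow {a b η : ℕ} {ξ : Fin R → ℕ} {A B z : ℝ} (hp : 0 < p)
    (hpR : 2 * R ^ (2 * (R * q)) ≤ p) (hA : 0 ≤ A)
    (hAB : 2 * ((p : ℝ) ^ (2 * (2 * (R * q)) + R) * A) ≤ B)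
    (hζ : ∀ ζ ∈ residueClass (p ^ b) (p ^ (b + 1)) η,
      mixedMean p M R q a (b + 1) ξ ζ ≤ B * (p : ℝ) ^ (z - 2))
    (hν : ∀ ν : Fin R ↪ residueClass (p ^ b) (p ^ (b + 1)) η,
      transversalMean p M R q a b ξ (fun i => ν i) ≤ A * (p : ℝ) ^ z) :
    mixedMean p M R q a b ξ η ≤ B * (p : ℝ) ^ z := by
  have hcard := card_residueClass_pow_succ hp b η
  have h := expect_mul_pow_le_of_embedding (ι := Fin R) (e := fun _ => 2 * q) (n := 2 * (R * q))
    (card_pos.1 (hcard.symm ▸ hp)) (congruenceProd_nonneg (a + 1) ξ)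
    (fun ζ α => congruenceSum_nonneg (b + 1) ζ α) (congruenceSum_nonneg b η)
    (congruenceSum_le_sum hp b.le_succ η)
    (by rw [sum_const, card_univ, Fintype.card_fin, smul_eq_mul]; ring)
    (u := B * (p : ℝ) ^ (z - 2)) (v := A * (p : ℝ) ^ z) (by positivity) hζ
    (fun ν => by simpa only [transversalMean, congruenceProd, pow_mul, prod_pow] using hν ν)
  rw [hcard, Fintype.card_fin, ← mul_assoc _ A] at h
  exact h.trans (mul_rpow_sub_two_add_mul_rpow_le (mod_cast hp) (le_trans (by positivity) hAB)
    (mod_cast hpR) hAB)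

lemma IsConditioned.of_le {a b b' η η' : ℕ} {ξ : Fin R → ℕ} (h : IsConditioned p q a b ξ η)
    (hb : b ≤ b') (hη : ∀ i, ¬ ξ i ≡ η' [MOD p]) : IsConditioned p q a b' ξ η' :=
  ⟨h.one_le.trans hb, h.mul_le.trans hb, h.isTransversal, hη⟩

/-- Of the classes modulo `p ^ (b + 1)` that refine `η` modulo `p ^ b`, either `R` contribute
comparably, which is the transversal case, or fewer than `R` dominate. The latter costs a bounded
factor and raises `b` by one; a saving of `p ^ 2` per level absorbs this. -/
lemma mixedMean_le_of_transversalMean_le {a b b₁ η : ℕ} {ξ : Fin R → ℕ} {A B E : ℝ} (hp : 0 < p)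
    (hpR : 2 * R ^ (2 * (R * q)) ≤ p) (hA : 0 ≤ A)
    (hAB : 2 * ((p : ℝ) ^ (2 * (2 * (R * q)) + R) * A) ≤ B) (h : IsConditioned p q a b ξ η)
    (hb : b ≤ b₁)
    (hbase : ∀ η', IsConditioned p q a b₁ ξ η' →
      mixedMean p M R q a b₁ ξ η' ≤ B * (p : ℝ) ^ (E - 2 * (b₁ - b)))
    (htransversal : ∀ (b' η' : ℕ) (ν : Fin R → ℕ), b ≤ b' → b' < b₁ → IsConditioned p q a b' ξ η' →
      IsTransversal p b' ν → (∀ l, ν l ≡ η' [MOD p ^ b']) →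
        transversalMean p M R q a b' ξ ν ≤ A * (p : ℝ) ^ (E - 2 * (b' - b))) :
    mixedMean p M R q a b ξ η ≤ B * (p : ℝ) ^ E := by
  have hdescend := Nat.decreasingInduction' (P := fun b' => ∀ η', IsConditioned p q a b' ξ η' →
    mixedMean p M R q a b' ξ η' ≤ B * (p : ℝ) ^ (E - 2 * (b' - b))) (fun b' hb' hbb' ih η' h' => ?_)
    hb hbase η h
  · simpa only [sub_self, mul_zero, sub_zero] using hdescend
  refine mixedMean_le_mul_rpow hp hpR hA hAB (fun ζ hζ => ?_) fun ν =>
    htransversal b' η' _ hbb' hb' h' (isTransversal_embedding ν)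
      fun i => (mem_residueClass.1 (ν i).2).2
  have hζη : ζ ≡ η' [MOD p] :=
    (mem_residueClass.1 hζ).2.of_dvd (dvd_pow_self p (Nat.one_le_iff_ne_zero.1 h'.one_le))
  have hcond := h'.of_le b'.le_succ fun i hi => h'.not_modEq i (hi.trans hζη)
  refine (ih ζ hcond).trans_eq ?_
  push_cast
  ring_nf

lemma MixedBound.gain {N : ℕ} {c' : ℝ} (hp : p.Prime) (hpRq : R + q < p)
    (hpR : 2 * R ^ (2 * (R * q)) ≤ p) (hR₂ : 2 ≤ R) (hR : R ≤ q + 1) (hq : 2 ≤ q) (hK : 1 ≤ K)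
    (hΛ : 0 ≤ Λ) (hJ : CountBound p (R * (q + 1)) (R + q) ((q + 1) * (R + Λ))) (hc₀ : 0 ≤ c')
    (hc : c' ≤ c + Λ) (hcN : c' ≤ N) (hB : MixedBound p R q Λ c K) :
    MixedBound p R q Λ c' (K * (q * (N + 1))) := by
  obtain ⟨A, hA, htransversal⟩ := hB.exists_transversalMean_le hp hpRq (by omega) hR hq hK hΛ hJ
  obtain ⟨D, hD, hholder⟩ := mixedBound_zero hp.one_lt (by omega) hq hΛ hJ
  have hp₁ : (1 : ℝ) ≤ p := mod_cast hp.one_le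
  have hRq : (4 : ℝ) ≤ R * q := mod_cast Nat.mul_le_mul hR₂ hq
  refine ⟨max D (2 * ((p : ℝ) ^ (2 * (2 * (R * q)) + R) * A)), lt_max_of_lt_left hD,
    fun M a b ξ η h hKM => ?_⟩
  have hKM' : K * (q * ((N + 1) * b)) ≤ M := by simpa only [mul_assoc] using hKM
  -- At level `(N + 1) * b` the bound sought is weaker than the one given by Hölder's inequality.
  refine mixedMean_le_of_transversalMean_le (b₁ := (N + 1) * b) hp.pos hpR hA.le
    (le_max_right _ _) h (Nat.le_mul_of_pos_left b N.succ_pos) (fun η' h' => ?_)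
    fun b' η' ν hbb' hb' h' hν hνη => ?_
  · refine (hholder M a _ ξ η' h' ?_).trans ?_
    · rw [one_mul]
      exact (Nat.le_mul_of_pos_left _ (by omega)).trans
        ((Nat.le_mul_of_pos_left _ hK).trans hKM')
    · gcongr ?_ * (p : ℝ) ^ ?_
      · exact le_max_left _ _
      · have hNb : (0 : ℝ) ≤ N * b := by positivity
        have := mul_le_mul_of_nonneg_right hRq hNb
        have := mul_le_mul_of_nonneg_right hcN b.cast_nonneg
        push_cast
        linarith
  · refine (htransversal M a b' ξ ν η' h'
      ((by gcongr : K * (q * b') ≤ _).trans hKM') hν hνη).trans ?_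
    gcongr A * (p : ℝ) ^ ?_
    have hbb'₀ : (b : ℝ) ≤ b' := mod_cast hbb'
    have := mul_le_mul_of_nonneg_right hRq (sub_nonneg.2 hbb'₀)
    have := mul_le_mul hc hbb'₀ (by positivity) (hc₀.trans hc)
    linarith

lemma exists_mixedBound (hp : p.Prime) (hpRq : R + q < p) (hpR : 2 * R ^ (2 * (R * q)) ≤ p)
    (hR₂ : 2 ≤ R) (hR : R ≤ q + 1) (hq : 2 ≤ q) {δ : ℝ} (hδ : 0 < δ) (N : ℕ) :
    ∃ K : ℕ, 1 ≤ K ∧ ∀ Λ : ℝ, δ ≤ Λ → CountBound p (R * (q + 1)) (R + q) ((q + 1) * (R + Λ)) →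
      MixedBound p R q Λ N K := by
  suffices h : ∀ n : ℕ, ∃ K : ℕ, 1 ≤ K ∧ ∀ Λ : ℝ, δ ≤ Λ →
      CountBound p (R * (q + 1)) (R + q) ((q + 1) * (R + Λ)) →
        MixedBound p R q Λ (min (n * δ) N) K by
    obtain ⟨n, hn⟩ := exists_nat_ge (N / δ)
    simpa only [min_eq_right ((div_le_iff₀ hδ).1 hn)] using h n
  intro n
  induction n with
  | zero =>
    refine ⟨1, le_rfl, fun Λ hΛ hJ => ?_⟩
    rw [Nat.cast_zero, zero_mul, min_eq_left N.cast_nonneg]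
    exact mixedBound_zero hp.one_lt (by omega) hq (hδ.le.trans hΛ) hJ
  | succ n ih =>
    obtain ⟨K, hK, ih⟩ := ih
    refine ⟨K * (q * (N + 1)), Nat.mul_pos hK (Nat.mul_pos (by omega) N.succ_pos),
      fun Λ hΛ hJ => (ih Λ hΛ hJ).gain hp hpRq hpR hR₂ hR hq hK (hδ.le.trans hΛ) hJ
        (by positivity) ?_ (min_le_right _ _)⟩
    rw [min_add]
    exact min_le_min (by push_cast; linarith) (by linarith)

end Iteration

section Descent

variable {p R q K s k : ℕ} {Λ E E' D G : ℝ}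

lemma MixedBound.exists_mixedMean_zero_one_le (hp : 0 < p) (hRq : 1 ≤ R * q)
    (hB : MixedBound p R q Λ (R * q + 1) K) :
    ∃ D : ℝ, 0 < D ∧ ∀ (M b : ℕ) (ξ : Fin R → ℕ) (η : ℕ), IsConditioned p q 0 b ξ η →
      K * b ≤ M → mixedMean p M R q 0 1 ξ η ≤
        D * (p : ℝ) ^ (M * ((q + 1) * (R + Λ)) - b) := by
  obtain ⟨D, hD, hB⟩ := hB
  refine ⟨D, hD, fun M b ξ η h hKM => ?_⟩
  obtain ⟨n, hn⟩ := Nat.exists_eq_add_of_le' (show 1 ≤ 2 * (R * q) by omega)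
  have hp₀ : (0 : ℝ) < p := mod_cast hp
  have hcard : (#(residueClass (p ^ 1) (p ^ b) η) : ℝ) ≤ (p : ℝ) ^ b := by
    rw [card_residueClass (pow_pos hp 1) (pow_dvd_pow p h.one_le)]
    exact_mod_cast Nat.div_le_self _ _
  set u := D * (p : ℝ) ^ (M * ((q + 1) * (R + Λ)) - (R * q + (R * q + 1)) * b)
  have hmixed ζ (hζ : ζ ∈ residueClass (p ^ 1) (p ^ b) η) :
      mixedMean p M R q 0 b ξ ζ ≤ u := by
    have hζη : ζ ≡ η [MOD p] := by simpa only [pow_one] using (mem_residueClass.1 hζ).2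
    simpa only [Nat.cast_zero, mul_zero, sub_zero] using
      hB M 0 b ξ ζ (h.of_le le_rfl fun i hi => h.not_modEq i (hi.trans hζη)) hKM
  simp only [mixedMean, hn] at hmixed ⊢
  calc 𝔼 α : Frequency (R * (q + 1)) (R + q) (p ^ M),
        congruenceProd (0 + 1) ξ α * congruenceSum 1 η α ^ (n + 1)
      ≤ (#(residueClass (p ^ 1) (p ^ b) η) : ℝ) ^ (n + 1) * u :=
        expect_mul_pow_le_card_pow_mul (congruenceProd_nonneg (0 + 1) ξ)
          (fun ζ α => congruenceSum_nonneg b ζ α) (congruenceSum_nonneg 1 η)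
          (congruenceSum_le_sum hp h.one_le η) hmixed
    _ ≤ ((p : ℝ) ^ b) ^ (n + 1) * u := by gcongr
    _ = D * (p : ℝ) ^ (M * ((q + 1) * (R + Λ)) - b) := by
        rw [← hn, ← pow_mul, ← Real.rpow_natCast, mul_left_comm, ← Real.rpow_add hp₀]
        congr 2
        push_cast
        ring

lemma isConditioned_zero_embedding {b : ℕ} (hb : 1 ≤ b)
    (c : Option (Fin R) ↪ residueClass (p ^ 0) (p ^ 1) 0) :
    IsConditioned p q 0 b (fun i => (c (some i) : ℕ)) (c none) := by
  have hc := isTransversal_embedding (b := 0) c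
  refine ⟨hb, by omega, ⟨fun i j => hc.1 _ _, fun i j hij => hc.2 ?_⟩, fun i => ?_⟩
  · exact fun h => hij (Option.some_injective _ h)
  · simpa only [zero_add, pow_one] using hc.2 (Option.some_ne_none i)

lemma MixedBound.exists_vinogradovCount_pow_le (hp : 0 < p) (hRq : 1 ≤ R * q)
    (hB : MixedBound p R q Λ (R * q + 1) K) :
    ∃ D : ℝ, 0 < D ∧ ∀ M b : ℕ, 1 ≤ M → 1 ≤ b → K * b ≤ M →
      (vinogradovCount (R * (q + 1)) (R + q) (p ^ M) : ℝ) ≤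
        (R + 1 : ℝ) ^ (2 * (R * (q + 1))) *
          (p * vinogradovCount (R * (q + 1)) (R + q) (p ^ (M - 1))) +
        D * (p : ℝ) ^ (M * ((q + 1) * (R + Λ)) - b) := by
  obtain ⟨D, hD, hB⟩ := hB.exists_mixedMean_zero_one_le hp hRq
  refine ⟨(p : ℝ) ^ (2 * (2 * (R * (q + 1))) + (R + 1)) * D, by positivity, fun M b hM hb hKM => ?_⟩
  have hcard : #(residueClass (p ^ 0) (p ^ 1) 0) = p := card_residueClass_pow_succ hp 0 0
  have hcongruent (ζ : ℕ) : 𝔼 α : Frequency (R * (q + 1)) (R + q) (p ^ M),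
      1 * congruenceSum 1 ζ α ^ (2 * (R * (q + 1))) ≤
        vinogradovCount (R * (q + 1)) (R + q) (p ^ (M - 1)) := by
    simpa only [one_mul] using expect_congruenceSum_pow_le hp hM ζ
  have htransversal (c : Option (Fin R) ↪ residueClass (p ^ 0) (p ^ 1) 0) :
      𝔼 α : Frequency (R * (q + 1)) (R + q) (p ^ M),
        1 * ∏ l, congruenceSum 1 (c l : ℕ) α ^ (l.elim (2 * (R * q)) fun _ => 2 : ℕ) ≤
          D * (p : ℝ) ^ (M * ((q + 1) * (R + Λ)) - b) := by
    simpa only [mixedMean, congruenceProd, one_mul, Fintype.prod_option, Option.elim_none,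
      Option.elim_some, mul_comm] using
      hB M b _ _ (isConditioned_zero_embedding hb c) hKM
  have hexponent : ∑ l : Option (Fin R), (l.elim (2 * (R * q)) fun _ => 2 : ℕ) =
      2 * (R * (q + 1)) := by
    simp only [Fintype.sum_option, Option.elim_none, Option.elim_some, sum_const, card_univ,
      Fintype.card_fin, smul_eq_mul]
    ring
  have hsplit := expect_mul_pow_le_of_embedding (card_pos.1 (hcard.symm ▸ hp))
    (fun _ => zero_le_one) (fun ζ α => congruenceSum_nonneg 1 ζ α) (congruenceSum_nonneg 0 0)
    (congruenceSum_le_sum hp zero_le_one 0) hexponent (by positivity) (fun ζ _ => hcongruent ζ)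
    htransversal
  simpa only [one_mul, expect_congruenceSum_zero_pow, hcard, Fintype.card_option,
    Fintype.card_fin, Nat.cast_add, Nat.cast_one, ← mul_assoc _ D] using hsplit

lemma CountBound.mono (hp : 1 ≤ p) (hE : E ≤ E') (h : CountBound p s k E) :
    CountBound p s k E' := by
  obtain ⟨C, hC, h⟩ := h
  have hp₁ : (1 : ℝ) ≤ p := mod_cast hp
  exact ⟨C, hC, fun m => (h m).trans (by gcongr)⟩

lemma vinogradovCount_le_pow (s k n : ℕ) : vinogradovCount s k n ≤ n ^ (2 * s) := by
  refine (card_le_card (t := (Fintype.piFinset fun _ => range n) ×ˢ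
    Fintype.piFinset fun _ => range n) fun z hz => ?_).trans_eq ?_
  · obtain ⟨hx, hy, -⟩ := mem_vinogradovSolutions.1 hz
    exact mem_product.2 ⟨Fintype.mem_piFinset.2 hx, Fintype.mem_piFinset.2 hy⟩
  · rw [card_product, Fintype.card_piFinset, prod_const, card_range, card_univ, Fintype.card_fin,
      two_mul, pow_add]

lemma countBound_two_mul (p s k : ℕ) : CountBound p s k (2 * s) := by
  refine ⟨1, one_pos, fun m => ?_⟩
  rw [one_mul, Real.rpow_natCast_mul p.cast_nonneg]
  exact_mod_cast vinogradovCount_le_pow s k (p ^ m)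

lemma rpow_sub_natCast_div_le (hp : 1 ≤ p) (E : ℝ) (M K : ℕ) :
    (p : ℝ) ^ (M * E - (M / K : ℕ)) ≤ p * (p : ℝ) ^ (M * (E - 1 / K)) := by
  have hp₁ : (1 : ℝ) ≤ p := mod_cast hp
  have hfloor := Nat.lt_floor_add_one ((M : ℝ) / K)
  rw [Nat.floor_div_eq_div] at hfloor
  rw [mul_comm (p : ℝ), ← Real.rpow_add_one (by positivity), mul_sub, mul_one_div]
  gcongr
  linarith

lemma CountBound.sub_one_div (hp : 0 < p) (hG : 2 * G ≤ p) (hG₀ : 0 ≤ G) (hE : 3 ≤ E) (hD : 0 ≤ D)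
    (hrec : ∀ M b : ℕ, 1 ≤ M → 1 ≤ b → K * b ≤ M → (vinogradovCount s k (p ^ M) : ℝ) ≤
      G * (p * vinogradovCount s k (p ^ (M - 1))) + D * (p : ℝ) ^ (M * E - b))
    (h : CountBound p s k E) : CountBound p s k (E - 1 / K) := by
  obtain ⟨C, hC, hJ⟩ := h
  have hp₁ : (1 : ℝ) ≤ p := mod_cast hp
  have hp₀ : (0 : ℝ) < p := mod_cast hp
  have hK : (1 : ℝ) / K ≤ 1 := by simpa only [one_div] using Nat.cast_inv_le_one K
  set B := max (C * p) (2 * (D * p))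
  have hB : 0 < B := lt_max_of_lt_left (by positivity)
  refine ⟨B, hB, fun m => ?_⟩
  induction m using Nat.strong_induction_on with
  | _ m ih =>
    have hsave := rpow_sub_natCast_div_le hp E m K
    rcases Nat.eq_zero_or_pos (m / K) with hb | hb
    · rw [hb, Nat.cast_zero, sub_zero] at hsave
      calc (vinogradovCount s k (p ^ m) : ℝ) ≤ C * (p : ℝ) ^ (m * E) := hJ m
        _ ≤ C * (p * (p : ℝ) ^ (m * (E - 1 / K))) := by gcongr
        _ = C * p * (p : ℝ) ^ (m * (E - 1 / K)) := (mul_assoc _ _ _).symm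
        _ ≤ B * (p : ℝ) ^ (m * (E - 1 / K)) := by
          gcongr
          exact le_max_left _ _
    · have hm : 1 ≤ m := hb.trans_le (Nat.div_le_self m K)
      have hexponent : ((m - 1 : ℕ) : ℝ) * (E - 1 / K) ≤ m * (E - 1 / K) - 2 := by
        rw [Nat.cast_sub hm, Nat.cast_one]
        linarith
      calc (vinogradovCount s k (p ^ m) : ℝ)
          ≤ G * (p * vinogradovCount s k (p ^ (m - 1))) + D * (p : ℝ) ^ (m * E - (m / K : ℕ)) :=
            hrec m _ hm hb (Nat.mul_div_le m K)
        _ ≤ G * (p * (B * (p : ℝ) ^ (m * (E - 1 / K) - 2))) +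
              D * (p * (p : ℝ) ^ (m * (E - 1 / K))) := by
            gcongr
            exact (ih (m - 1) (by omega)).trans (by gcongr B * (p : ℝ) ^ ?_)
        _ ≤ B * (p : ℝ) ^ (m * (E - 1 / K)) := by
            rw [← mul_assoc D]
            exact mul_rpow_sub_two_add_mul_rpow_le hp₀ hB.le hG (le_max_right _ _)

lemma exists_countBound_sub (hp : p.Prime) (hpRq : R + q < p)
    (hpR : 2 * (R + 1) ^ (2 * (R * (q + 1))) ≤ p) (hR₂ : 2 ≤ R) (hR : R ≤ q + 1) (hq : 2 ≤ q)
    {δ : ℝ} (hδ : 0 < δ) :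
    ∃ σ : ℝ, 0 < σ ∧ ∀ Λ : ℝ, δ ≤ Λ →
      CountBound p (R * (q + 1)) (R + q) ((q + 1) * (R + Λ)) →
        CountBound p (R * (q + 1)) (R + q) ((q + 1) * (R + (Λ - σ))) := by
  have hpR' : 2 * R ^ (2 * (R * q)) ≤ p := by
    refine le_trans (Nat.mul_le_mul_left 2 ?_) hpR
    exact (Nat.pow_le_pow_left R.le_succ _).trans
      (Nat.pow_le_pow_right R.succ_pos (by gcongr; exact q.le_succ))
  obtain ⟨K, hK, hB⟩ := exists_mixedBound hp hpRq hpR' hR₂ hR hq hδ (R * q + 1)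
  refine ⟨1 / K / (q + 1), by positivity, fun Λ hΛ hJ => ?_⟩
  have hBΛ := hB Λ hΛ hJ
  rw [Nat.cast_add_one, Nat.cast_mul] at hBΛ
  obtain ⟨D, hD, hrec⟩ :=
    hBΛ.exists_vinogradovCount_pow_le hp.pos (Nat.mul_pos (by omega) (by omega))
  have hE : 3 ≤ (q + 1) * (R + Λ) := by
    have : (2 : ℝ) ≤ R := mod_cast hR₂
    have : (2 : ℝ) ≤ q := mod_cast hq
    nlinarith
  convert hJ.sub_one_div hp.pos (mod_cast hpR) (by positivity) hE hD.le hrec using 1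
  field_simp
  ring

lemma of_forall_ge_imp_sub {P : ℝ → Prop} {σ δ t : ℝ} (hσ : 0 < σ)
    (hmono : ∀ ⦃x y⦄, x ≤ y → P x → P y) (ht : P t) (hsub : ∀ x, δ ≤ x → P x → P (x - σ)) :
    P δ := by
  have hdescend (n : ℕ) : P (max δ (t - n * σ)) := by
    induction n with
    | zero => exact hmono (by simp) ht
    | succ n ih =>
      refine hmono ?_ (hsub _ (le_max_left _ _) ih)
      rw [sub_le_iff_le_add, max_add]
      exact max_le_max (by linarith) (by push_cast; linarith)
  obtain ⟨n, hn⟩ := exists_nat_ge ((t - δ) / σ)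
  rw [div_le_iff₀ hσ] at hn
  exact hmono (max_le le_rfl (by linarith)) (hdescend n)

lemma countBound_of_pos (hp : p.Prime) (hpRq : R + q < p)
    (hpR : 2 * (R + 1) ^ (2 * (R * (q + 1))) ≤ p) (hR₂ : 2 ≤ R) (hR : R ≤ q + 1) (hq : 2 ≤ q)
    (hΛ : 0 < Λ) : CountBound p (R * (q + 1)) (R + q) ((q + 1) * (R + Λ)) := by
  obtain ⟨σ, hσ, hsub⟩ := exists_countBound_sub hp hpRq hpR hR₂ hR hq hΛ
  refine of_forall_ge_imp_sub (P := fun Λ => CountBound p _ _ ((q + 1) * (R + Λ))) (t := R) hσ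
    (fun x y hxy h => h.mono hp.one_le (by gcongr)) ?_ hsub
  convert countBound_two_mul p (R * (q + 1)) (R + q) using 1
  push_cast
  ring

end Descent

lemma vinogradovCount_mul_pow_le (s t k n : ℕ) :
    vinogradovCount s k n * n ^ t ≤ vinogradovCount (s + t) k n := by
  have hcard : #(Fintype.piFinset fun _ : Fin t => range n) = n ^ t := by
    rw [Fintype.card_piFinset, prod_const, card_range, card_univ, Fintype.card_fin]
  rw [vinogradovCount, ← hcard, ← card_product]
  refine card_le_card_of_injOn (fun w => (Fin.append w.1.1 w.2, Fin.append w.1.2 w.2)) ?_ ?_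
  · rintro ⟨⟨x, y⟩, z⟩ hw
    simp only [mem_coe, mem_product, mem_vinogradovSolutions, Fintype.mem_piFinset] at hw ⊢
    obtain ⟨⟨hx, hy, hxy⟩, hz⟩ := hw
    have append_mem {x : Fin s → ℕ} (hx : ∀ i, x i ∈ range n) i : Fin.append x z i ∈ range n :=
      Fin.addCases (fun i => by simpa only [Fin.append_left] using hx i)
        (fun i => by simpa only [Fin.append_right] using hz i) i
    refine ⟨append_mem hx, append_mem hy, fun j hj => ?_⟩
    simpa only [Fin.sum_univ_add, Fin.append_left, Fin.append_right, add_left_inj] using hxy j hj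
  · rintro ⟨⟨x, y⟩, z⟩ - ⟨⟨x', y'⟩, z'⟩ - h
    obtain ⟨hx, hy⟩ := Prod.mk.inj h
    obtain ⟨rfl, rfl⟩ := Prod.mk.inj ((Fin.appendEquiv s t).injective hx)
    obtain ⟨rfl, -⟩ := Prod.mk.inj ((Fin.appendEquiv s t).injective hy)
    rfl

lemma CountBound.of_add {p s t k : ℕ} {E : ℝ} (hp : 0 < p) (h : CountBound p (s + t) k (E + t)) :
    CountBound p s k E := by
  obtain ⟨C, hC, h⟩ := h
  have hp₀ : (0 : ℝ) < p := mod_cast hp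
  refine ⟨C, hC, fun m => le_of_mul_le_mul_right ?_ (by positivity : (0 : ℝ) < (p ^ m) ^ t)⟩
  calc (vinogradovCount s k (p ^ m) : ℝ) * (p ^ m) ^ t ≤ vinogradovCount (s + t) k (p ^ m) := by
        exact_mod_cast vinogradovCount_mul_pow_le s t k (p ^ m)
    _ ≤ C * (p : ℝ) ^ (m * (E + t)) := h m
    _ = C * (p : ℝ) ^ (m * E) * (p ^ m) ^ t := by
        rw [mul_add, Real.rpow_add hp₀, mul_assoc, Real.rpow_mul_natCast hp₀.le, Real.rpow_natCast]

lemma Jcount_le_vinogradovCount {s k n : ℕ} {X : ℝ} (hX : X < n) :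
    Jcount s k X ≤ vinogradovCount s k n := by
  have toNat_mem {a : ℤ} (ha : 1 ≤ a ∧ (a : ℝ) ≤ X) : a.toNat ∈ range n := by
    have : a < n := mod_cast ha.2.trans_lt hX
    rw [mem_range]
    omega
  rw [Jcount, vinogradovCount, ← Set.ncard_coe_finset]
  refine Set.ncard_le_ncard_of_injOn
    (fun z => (fun i => (z.1 i).toNat, fun i => (z.2 i).toNat)) ?_ ?_ (finite_toSet _)
  · rintro ⟨x, y⟩ ⟨hx, hy, hxy⟩
    refine mem_vinogradovSolutions.2 ⟨fun i => toNat_mem (hx i), fun i => toNat_mem (hy i), ?_⟩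
    rw [← isVinogradovSolution_natCast_iff (A := ℤ)]
    intro j hj
    have h := hxy j hj
    rw [sum_sub_distrib, sub_eq_zero] at h
    simpa only [Int.toNat_of_nonneg (zero_le_one.trans (hx _).1),
      Int.toNat_of_nonneg (zero_le_one.trans (hy _).1)] using h
  · have toNat_inj {a b : ℤ} (ha : 1 ≤ a) (hb : 1 ≤ b) (h : a.toNat = b.toNat) : a = b := by
      omega
    rintro ⟨x, y⟩ ⟨hx, hy, -⟩ ⟨x', y'⟩ ⟨hx', hy', -⟩ h
    obtain ⟨h₁, h₂⟩ := Prod.mk.inj h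
    exact Prod.ext (funext fun i => toNat_inj (hx i).1 (hx' i).1 (congrFun h₁ i))
      (funext fun i => toNat_inj (hy i).1 (hy' i).1 (congrFun h₂ i))

lemma CountBound.exists_Jcount_le {p s k : ℕ} {E : ℝ} (hp : 1 < p) (hE : 0 ≤ E)
    (h : CountBound p s k E) :
    ∃ C : ℝ, 0 < C ∧ ∀ X : ℝ, 1 ≤ X → (Jcount s k X : ℝ) ≤ C * X ^ E := by
  obtain ⟨C, hC, h⟩ := h
  have hp₀ : (0 : ℝ) < p := mod_cast zero_lt_one.trans hp
  refine ⟨C * (p : ℝ) ^ E, by positivity, fun X hX => ?_⟩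
  obtain ⟨n, hn, hn'⟩ := exists_nat_pow_near hX (Nat.one_lt_cast.2 hp)
  calc (Jcount s k X : ℝ) ≤ vinogradovCount s k (p ^ (n + 1)) :=
        Nat.cast_le.2 (Jcount_le_vinogradovCount (mod_cast hn'))
    _ ≤ C * (p : ℝ) ^ ((n + 1 : ℕ) * E) := h _
    _ = C * (p : ℝ) ^ E * ((p : ℝ) ^ n) ^ E := by
        rw [Real.rpow_natCast_mul hp₀.le, pow_succ', Real.mul_rpow hp₀.le (by positivity),
          mul_assoc]
    _ ≤ C * (p : ℝ) ^ E * X ^ E := by gcongr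

lemma exists_add_eq_and_le_mul_succ {k s : ℕ} (hs : 4 * s ≤ (k + 1) ^ 2) :
    ∃ R q : ℕ, R + q = k ∧ q ≤ R ∧ R ≤ q + 1 ∧ s ≤ R * (q + 1) := by
  rcases Nat.even_or_odd' k with ⟨n, rfl | rfl⟩
  · exact ⟨n, n, by ring, le_rfl, by omega, by linarith⟩
  · exact ⟨n + 1, n, by ring, by omega, le_rfl, by linarith⟩

/-- Theorem 1.1: for k at least 4 and 1 ≤ s ≤ (k+1)²/4, one has
J_{s,k}(X) ≤ C(s,k,ε) X^{s+ε} for all X ≥ 1. -/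
theorem main_conjecture_diagonal_range (k s : ℕ) (hk : 4 ≤ k) (hs1 : 1 ≤ s)
    (hs2 : (s : ℝ) ≤ ((k : ℝ) + 1) ^ 2 / 4) (ε : ℝ) (hε : 0 < ε) :
    ∃ C : ℝ, 0 < C ∧ ∀ X : ℝ, 1 ≤ X →
      (Jcount s k X : ℝ) ≤ C * X ^ ((s : ℝ) + ε) := by
  have h4s : (4 * s : ℝ) ≤ (k + 1) ^ 2 := by linarith
  obtain ⟨R, q, rfl, hqR, hR, hsR⟩ := exists_add_eq_and_le_mul_succ (s := s) (mod_cast h4s)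
  obtain ⟨t, ht⟩ := Nat.exists_eq_add_of_le hsR
  obtain ⟨p, hp_le, hp⟩ := Nat.exists_infinite_primes
    (R + q + 1 + 2 * (R + 1) ^ (2 * (R * (q + 1))))
  have hcount : CountBound p (R * (q + 1)) (R + q) ((q + 1) * (R + ε / (q + 1))) :=
    countBound_of_pos hp (by omega) (by omega) (by omega) hR (by omega) (by positivity)
  have hexponent : (q + 1) * (R + ε / (q + 1)) = s + ε + t := by
    have : (R : ℝ) * (q + 1) = s + t := mod_cast ht
    field_simp
    linarith
  rw [ht, hexponent] at hcount
  exact hcount.of_add hp.pos |>.exists_Jcount_le hp.one_lt (by positivity)
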